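/- arXiv:1602.01992 — 5 statements merged into one kernel-verified Lean document; each statement's English description precedes it below -/
import Mathlib

section
/- For every integer k ≥ 1 and every ε > 0 there exists γ = γ(ε,k) > 0 such that the following holds for every finite abelian group G: if M : G^k → G^k is a group homomorphism with M(x,…,x) = 0 for every x ∈ G, S = M^{-1}(0), and A ⊆ G satisfies |A| > ε|G|, then |A^k ∩ S| ≥ γ|S|. -/
open Finset

attribute [local instance] Classical.propDecidable

/-!
A density decrement argument proves the density Hales–Jewett theorem, by induction on the alphabet.
Suppose that it holds over `α` and that line-free sets over `Option α` have asymptotic density at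
most `δ > 0`, and let `A` be line-free. By a Ramsey argument in an initial block of coordinates,
either some section of `A` is sparse, or there is a subspace all of whose words over `Option α`,
read as lines over `α` with `none` as the variable, lie in many sections of `A`. In the second case
let `D a` be the set of words that enter `A` when `none` is replaced by `a`. This set is insensitive
to changes between `a` and `none`, and `A` avoids the intersection of the sets `D a`, since it is
line-free. The theorem over `α` implies that insensitive sets, hence also their intersections, are
almost tiled by subspaces of large dimension, on each of which `A` has density at most about `δ`.
So `A` has no compensating excess outside of the intersection, and on average over the sections the
intersection is dense: again some section of `A` is sparse. Averaging, the bound `δ` can be lowered.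

For the application, choose `x : G` and elements `s j` of `S` uniformly at random and assign to a
word `w` the point `x + ∑ j, s j (w j)`, which is uniformly distributed in `G`. The points on a line
form a uniformly distributed element of `S`: it is an element of `S` because constants are, and it
is uniformly distributed because of the summand `s j` for a wildcard coordinate `j`. Since there is
a bounded number of lines, on one of them all points lie in `A` with probability bounded below.
-/

universe u

namespace DensityHalesJewett

open Function
open Combinatorics (Line Subspace)
open scoped BigOperators

section Density

variable {X Y : Type*}

/-- The density of a subset of a finite type, i.e. its uniform probability. -/
noncomputable def density (A : Set X) : ℝ := A.ncard / Nat.card X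

lemma density_nonneg (A : Set X) : 0 ≤ density A := by unfold density; positivity

@[simp] lemma density_empty : density (∅ : Set X) = 0 := by simp [density]

@[simp] lemma density_univ [Finite X] [Nonempty X] : density (Set.univ : Set X) = 1 := by
  simp [density, Set.ncard_univ]

lemma density_preimage_of_bijective {f : X → Y} (hf : Bijective f) (A : Set Y) :
    density (f ⁻¹' A) = density A := by
  rw [density, density, Nat.card_congr (Equiv.ofBijective f hf),
    Set.ncard_preimage_of_injective_subset_range hf.1 (by simp [hf.2.range_eq])]

lemma density_inter_range [Finite Y] {f : X → Y} (hf : Injective f) (B : Set Y) :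
    density (B ∩ Set.range f) = Nat.card X / Nat.card Y * density (f ⁻¹' B) := by
  have := Finite.of_injective f hf
  rw [density, density, ← Set.image_preimage_eq_inter_range, Set.ncard_image_of_injective _ hf]
  obtain hX | hX := isEmpty_or_nonempty X
  · simp [Set.eq_empty_of_isEmpty]
  · have : (Nat.card X : ℝ) ≠ 0 := mod_cast Nat.card_pos.ne'
    field_simp

lemma density_coe_finset [Fintype X] (A : Finset X) :
    density (A : Set X) = A.card / Fintype.card X := by
  rw [density, Set.ncard_coe_finset, Nat.card_eq_fintype_card]

lemma density_subtype [Fintype X] (p q : X → Prop) :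
    density {x : {x // p x} | q x} = (univ.filter fun x => p x ∧ q x).card /
      ((univ.filter p).card : ℝ) := by
  have image_val : Subtype.val '' {x : {x // p x} | q x} = univ.filter fun x => p x ∧ q x := by
    ext x
    simp [and_comm]
  rw [density, Nat.card_eq_fintype_card, Fintype.card_subtype,
    ← Set.ncard_image_of_injective _ Subtype.val_injective, image_val, Set.ncard_coe_finset]

section Finite

variable [Finite X]

lemma density_mono {A B : Set X} (h : A ⊆ B) : density A ≤ density B := by
  unfold density
  have := Set.ncard_le_ncard h (Set.toFinite B)
  gcongr

lemma density_le_one (A : Set X) : density A ≤ 1 :=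
  div_le_one_of_le₀ (mod_cast Set.ncard_le_card A) (by positivity)

lemma density_union {A B : Set X} (h : Disjoint A B) :
    density (A ∪ B) = density A + density B := by
  rw [density, Set.ncard_union_eq h, Nat.cast_add, add_div, density, density]

lemma density_inter_add_diff (A B : Set X) : density (A ∩ B) + density (A \ B) = density A := by
  rw [← density_union Set.disjoint_sdiff_inter.symm, Set.inter_union_sdiff]

end Finite

lemma density_eq_expect [Fintype X] (A : Set X) :
    density A = 𝔼 x, if x ∈ A then (1 : ℝ) else 0 := by
  rw [Fintype.expect_eq_sum_div_card, sum_boole, density, Nat.card_eq_fintype_card,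
    Set.ncard_eq_toFinset_card']
  congr; ext; simp

section Fubini

variable [Fintype X]

lemma expect_density_comm [Fintype Y] (R : X → Set Y) :
    𝔼 x, density (R x) = 𝔼 y, density {x | y ∈ R x} := by
  simp only [density_eq_expect, Set.mem_ofPred_eq]
  exact expect_comm ..

variable [Finite Y]

lemma density_eq_expect_sections (A : Set (X × Y)) : density A = 𝔼 x, density {y | (x, y) ∈ A} := by
  have := Fintype.ofFinite Y
  simp only [density_eq_expect, Set.mem_ofPred_eq]
  exact expect_product univ univ fun z => if z ∈ A then (1 : ℝ) else 0

variable {Z : Type*} (e : X × Y ≃ Z)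

lemma density_eq_expect_equiv (A : Set Z) : density A = 𝔼 x, density {y | e (x, y) ∈ A} := by
  rw [← density_preimage_of_bijective e.bijective, density_eq_expect_sections]
  rfl

end Fubini

lemma exists_le_density_of_subset_iUnion {ι : Type*} [Fintype ι] [Finite X] {c : ℝ} (hc : 0 < c)
    {B : Set X} (hB : c ≤ density B) {T : ι → Set X} (hT : B ⊆ ⋃ i, T i) :
    ∃ i, c / (Fintype.card ι + 1) ≤ density (T i) := by
  by_contra! h
  have union_bound : (B.ncard : ℝ) ≤ ∑ i, (T i).ncard := mod_cast
    (Set.ncard_le_ncard hT (Set.toFinite _)).trans <| by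
      simpa using Set.ncard_iUnion_le_of_fintype T
  have : density B ≤ ∑ i, density (T i) := by
    simp only [density, ← sum_div]
    gcongr
    exact_mod_cast union_bound
  have : ∑ i, density (T i) ≤ Fintype.card ι * (c / (Fintype.card ι + 1)) := by
    simpa using sum_le_card_nsmul univ _ _ fun i _ => (h i).le
  have : Fintype.card ι * (c / (Fintype.card ι + 1)) < c := by
    rw [mul_div_assoc', div_lt_iff₀ (by positivity)]
    linarith
  linarith

lemma half_le_density_of_le_expect [Fintype X] {f : X → ℝ} (hf : ∀ x, f x ≤ 1) {δ : ℝ}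
    (hδ : 0 < δ) (h : δ ≤ 𝔼 x, f x) : δ / 2 ≤ density {x | δ / 2 ≤ f x} := by
  have hX : Nonempty X := by
    by_contra hX
    simp only [not_nonempty_iff] at hX
    simp [univ_eq_empty] at h
    linarith
  calc δ / 2 ≤ (𝔼 x, f x) - δ / 2 := by linarith
    _ = 𝔼 x, (f x - δ / 2) := by rw [expect_sub_distrib, Fintype.expect_const]
    _ ≤ 𝔼 x, if x ∈ {x | δ / 2 ≤ f x} then (1 : ℝ) else 0 := expect_le_expect fun x _ => by
      have := hf x
      split_ifs with hx <;> simp only [Set.mem_ofPred_eq, not_le] at hx <;> linarith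
    _ = _ := (density_eq_expect _).symm

lemma expect_le_sub_of_exists_le [Fintype X] {f : X → ℝ} {a b : ℝ} (hf : ∀ x, f x ≤ a)
    (hb : ∃ x, f x ≤ b) : 𝔼 x, f x ≤ a - (a - b) / Fintype.card X := by
  obtain ⟨x₀, hx₀⟩ := hb
  have hX : (0 : ℝ) < Fintype.card X := mod_cast Fintype.card_pos_iff.2 ⟨x₀⟩
  have gap : a - b ≤ ∑ x, (a - f x) :=
    (sub_le_sub_left hx₀ a).trans <|
      single_le_sum (f := fun x => a - f x) (fun x _ => sub_nonneg.2 (hf x)) (mem_univ x₀)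
  have : ∑ x, (a - f x) = Fintype.card X * a - ∑ x, f x := by simp [sum_sub_distrib]
  rw [Fintype.expect_eq_sum_div_card, div_le_iff₀ hX, sub_mul, div_mul_cancel₀ _ hX.ne']
  linarith

end Density

section Cube

variable {α J K : Type*} [Fintype α]

lemma density_eq_expect_elim [Fintype J] [Finite K] (A : Set (J ⊕ K → α)) :
    density A = 𝔼 x, density (Sum.elim x ⁻¹' A) :=
  density_eq_expect_equiv (Equiv.sumArrowEquivProdArrow J K α).symm A

lemma density_eq_expect_elim' [Finite J] [Fintype K] (A : Set (J ⊕ K → α)) :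
    density A = 𝔼 y, density ((Sum.elim · y) ⁻¹' A) := by
  have := Fintype.ofFinite J
  exact (density_eq_expect_elim A).trans (expect_density_comm fun x => Sum.elim x ⁻¹' A)

end Cube

section Subspaces

variable {α ι J K η ζ : Type*}

/-- The subspace of `ι → α` that has coordinates `W` inside the subspace `V`. -/
def compSubspace (V : Subspace η α ι) (W : Subspace ζ α η) : Subspace ζ α ι where
  idxFun i := (V.idxFun i).elim .inl W.idxFun
  proper e := by
    obtain ⟨j, hj⟩ := W.proper e
    obtain ⟨i, hi⟩ := V.proper j
    exact ⟨i, by simp [hi, hj]⟩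

@[simp] lemma compSubspace_apply (V : Subspace η α ι) (W : Subspace ζ α η) (x : ζ → α) :
    compSubspace V W x = V (W x) := by
  ext i
  cases h : V.idxFun i <;> simp [Combinatorics.Subspace.apply_def, compSubspace, h]

/-- The line of `ι → α` that has coordinates `l` inside the subspace `V`. -/
def compLine (V : Subspace η α ι) (l : Line α η) : Line α ι where
  idxFun i := (V.idxFun i).elim some l.idxFun
  proper := by
    obtain ⟨j, hj⟩ := l.proper
    obtain ⟨i, hi⟩ := V.proper j
    exact ⟨i, by simp [hi, hj]⟩

@[simp] lemma compLine_apply (V : Subspace η α ι) (l : Line α η) (a : α) :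
    compLine V l a = V (l a) := by
  ext i
  cases h : V.idxFun i <;> simp [Combinatorics.Subspace.apply_def, compLine, h]

/-- The subspace of `J ⊕ K → α` in which the `J`-coordinates are fixed to be `x`. -/
def fixInl (x : J → α) : Subspace K α (J ⊕ K) where
  idxFun := Sum.map x id
  proper k := ⟨.inr k, rfl⟩

@[simp] lemma coe_fixInl (x : J → α) : ⇑(fixInl x : Subspace K α (J ⊕ K)) = Sum.elim x := by
  ext y (i | i) <;> rfl

/-- The subspace of `J ⊕ K → α` in which the `K`-coordinates are fixed to be `y`. -/
def fixInr (y : K → α) : Subspace J α (J ⊕ K) where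
  idxFun := Sum.swap ∘ Sum.map id y
  proper j := ⟨.inl j, rfl⟩

@[simp] lemma coe_fixInr (y : K → α) :
    ⇑(fixInr y : Subspace J α (J ⊕ K)) = (Sum.elim · y) := by
  ext x (i | i) <;> rfl

/-- The subspace of `J ⊕ K → α` with one direction moving along the line `l` in the
`J`-coordinates, and the other directions moving in `V` in the `K`-coordinates. -/
def lineProdSubspace (l : Line α J) (V : Subspace η α K) : Subspace (Option η) α (J ⊕ K) where
  idxFun := Sum.elim (fun j => (l.idxFun j).elim (.inr none) .inl)
    fun k => (V.idxFun k).map id some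
  proper
    | none => l.proper.imp' .inl fun j hj => by simp [hj]
    | some e => (V.proper e).imp' .inr fun k hk => by simp [hk]

@[simp] lemma lineProdSubspace_apply (l : Line α J) (V : Subspace η α K) (z : Option η → α) :
    lineProdSubspace l V z = Sum.elim (l (z none)) (V (z ∘ some)) := by
  ext (j | k)
  · cases h : l.idxFun j <;> simp [Combinatorics.Subspace.apply_def, lineProdSubspace, h]
  · cases h : V.idxFun k <;> simp [Combinatorics.Subspace.apply_def, lineProdSubspace, h]

lemma subspace_injective (V : Subspace η α ι) : Injective V := fun x y h => by
  ext e
  obtain ⟨i, hi⟩ := V.proper e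
  simpa [Combinatorics.Subspace.apply_inr hi] using congrFun h i

/-- Splitting the coordinates by a bijective subspace, rather than by an equivalence, makes the
lemmas on preimages under subspaces and on compositions of subspaces applicable. -/
lemma exists_bijective_subspace (α : Type*) {ι J : Type} [Fintype ι] [Fintype J] {N : ℕ}
    (h : Fintype.card J + N ≤ Fintype.card ι) :
    ∃ (K : Type) (_ : Fintype K) (V : Subspace (J ⊕ K) α ι),
      N ≤ Fintype.card K ∧ Bijective V := by
  let K := Fin (Fintype.card ι - Fintype.card J)
  have e : J ⊕ K ≃ ι := Fintype.equivOfCardEq (by simp [K]; omega)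
  refine ⟨K, inferInstance, (default : Subspace _ α _).reindex (.refl _) (.refl _) e,
    by simp [K]; omega, subspace_injective _, fun x => ⟨x ∘ e, ?_⟩⟩
  ext i
  rw [Combinatorics.Subspace.reindex_apply]
  simp [Combinatorics.Subspace.apply_def, default]

end Subspaces

section LineFree

variable {α ι η : Type*}

/-- A subset of a cube is line-free if it contains no combinatorial line. -/
def LineFree (A : Set (ι → α)) : Prop := ∀ l : Line α ι, ∃ a, l a ∉ A

lemma LineFree.preimage {A : Set (ι → α)} (hA : LineFree A) (V : Subspace η α ι) :
    LineFree (V ⁻¹' A) := fun l => by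
  simpa using hA (compLine V l)

/-- The asymptotic density of line-free sets over the alphabet `α` is at most `δ`. The density
Hales–Jewett theorem for `α` is the case `δ = 0`. -/
def LineFreeDensityBound (α : Type*) (δ : ℝ) : Prop :=
  ∀ γ > 0, ∃ N : ℕ, ∀ (ι : Type) [Fintype ι], N ≤ Fintype.card ι →
    ∀ A : Set (ι → α), LineFree A → density A ≤ δ + γ

lemma exists_dense_line [Fintype α] {δ : ℝ} (h : LineFreeDensityBound α 0) (hδ : 0 < δ) :
    ∃ (J : Type) (_ : Fintype J) (θ : ℝ), 0 < θ ∧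
      ∀ {Y : Type*} [Fintype Y] (R : (J → α) → Set Y),
        δ ≤ 𝔼 x, density (R x) → ∃ l : Line α J, θ ≤ density (⋂ a, R (l a)) := by
  obtain ⟨J, _, hJ⟩ : ∃ (J : Type) (_ : Fintype J),
      ∀ A : Set (J → α), LineFree A → density A ≤ 0 + δ / 4 := by
    obtain ⟨N, hN⟩ := h (δ / 4) (by positivity)
    exact ⟨Fin N, inferInstance, hN _ (by simp)⟩
  have : Finite (Line α J) := .of_injective (·.idxFun) fun _ _ => Combinatorics.Line.ext
  have := Fintype.ofFinite (Line α J)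
  refine ⟨J, inferInstance, δ / 2 / (Fintype.card (Line α J) + 1), by positivity,
    fun {Y} _ R hR => ?_⟩
  rw [expect_density_comm R] at hR
  have rich := half_le_density_of_le_expect (fun y => density_le_one _) hδ hR
  refine exists_le_density_of_subset_iUnion (half_pos hδ) rich fun y hy => ?_
  by_contra hline
  have lineFree : LineFree {x | y ∈ R x} := by simpa [LineFree] using hline
  have := hJ _ lineFree
  have : δ / 2 ≤ density {x | y ∈ R x} := hy
  linarith

lemma exists_subspace_subset [Finite α] (h : LineFreeDensityBound α 0) (η : Type*) [Finite η] :
    ∀ δ > 0, ∃ N : ℕ, ∀ (ι : Type) [Fintype ι], N ≤ Fintype.card ι →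
      ∀ A : Set (ι → α), δ ≤ density A → ∃ V : Subspace η α ι, ∀ x, V x ∈ A := by
  have := Fintype.ofFinite α
  induction η using Finite.induction_empty_option with
  | of_equiv e ih =>
    intro δ hδ
    obtain ⟨N, hN⟩ := ih δ hδ
    refine ⟨N, fun ι _ hι A hA => ?_⟩
    obtain ⟨V, hV⟩ := hN ι hι A hA
    refine ⟨V.reindex e (.refl _) (.refl _), fun x => ?_⟩
    convert hV (x ∘ e)
    ext i
    simp
  | h_empty =>
    refine fun δ hδ => ⟨0, fun ι _ _ A hA => ?_⟩
    obtain ⟨x, hx⟩ : A.Nonempty := by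
      by_contra! hA'
      simp only [hA', density_empty] at hA
      linarith
    exact ⟨⟨.inl ∘ x, fun e => e.elim⟩, fun _ => hx⟩
  | h_option ih =>
    intro δ hδ
    obtain ⟨J, _, θ, hθ, hline⟩ := exists_dense_line h hδ
    obtain ⟨N', hN'⟩ := ih θ hθ
    refine ⟨Fintype.card J + N', fun ι _ hι A hA => ?_⟩
    obtain ⟨K, _, U, hK, hU⟩ := exists_bijective_subspace α hι
    rw [← density_preimage_of_bijective hU, density_eq_expect_elim] at hA
    obtain ⟨l, hl⟩ := hline _ hA
    obtain ⟨V, hV⟩ := hN' K hK _ hl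
    refine ⟨compSubspace U (lineProdSubspace l V), fun z => ?_⟩
    simpa using Set.mem_iInter.1 (hV (z ∘ some)) (z none)

end LineFree

section Ramsey

variable {α : Type*} {ι J η ζ : Type*}

/-- The subspace over the alphabet `Option α` described by the same word as `V`. -/
def liftOption (V : Subspace η α ι) : Subspace η (Option α) ι where
  idxFun i := (V.idxFun i).map some id
  proper e := (V.proper e).imp fun i hi => by simp [hi]

lemma liftOption_reindex_dirs (V : Subspace η α ι) (e : η ≃ ζ) (z : ζ → Option α) :
    liftOption (V.reindex e (.refl _) (.refl _)) z = liftOption V (z ∘ e) := by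
  ext1 i
  cases h : V.idxFun i <;>
    simp [Combinatorics.Subspace.apply_def, liftOption, Combinatorics.Subspace.reindex, h]

lemma liftOption_compSubspace (V : Subspace η α ι) (W : Subspace ζ α η) (z : ζ → Option α) :
    liftOption (compSubspace V W) z = liftOption V (liftOption W z) := by
  ext1 i
  cases h : V.idxFun i <;>
    simp [Combinatorics.Subspace.apply_def, liftOption, compSubspace, h]

lemma liftOption_lineProdSubspace_diagonal (V : Subspace η α J) (z : Option η → Option α) :
    liftOption (lineProdSubspace (.diagonal α Unit) V) z =
      Sum.elim (fun _ => z none) (liftOption V (z ∘ some)) := by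
  ext1 (i | i)
  · rfl
  · cases h : V.idxFun i <;>
      simp [Combinatorics.Subspace.apply_def, liftOption, lineProdSubspace, h]

/-- The subspace over the alphabet `α` obtained from a word over `Option α` by merging the letter
`none` and the variables in `η` into a single variable. -/
def mergeNone [Nonempty η] (V : Subspace (η ⊕ J) (Option α) ι) : Subspace (Unit ⊕ J) α ι where
  idxFun i := (V.idxFun i).elim (fun o => o.elim (.inr (.inl ())) .inl)
    fun e => .inr (e.map (fun _ => ()) id)
  proper
    | .inl _ => (V.proper (.inl (Classical.arbitrary η))).imp fun i hi => by simp [hi]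
    | .inr j => (V.proper (.inr j)).imp fun i hi => by simp [hi]

lemma liftOption_mergeNone [Nonempty η] (V : Subspace (η ⊕ J) (Option α) ι) (z : J → Option α) :
    liftOption (mergeNone V) (Sum.elim (fun _ => none) z) = V (Sum.elim (fun _ => none) z) := by
  ext1 i
  rcases h : V.idxFun i with (_ | a) | (e | j) <;>
    simp [Combinatorics.Subspace.apply_def, liftOption, mergeNone, h]

/-- The family of sets, rather than a single one, is needed for the induction on `ρ`: fixing the
last variable to each of the letters of `α` multiplies the number of sets by `|α|`. -/
theorem exists_subspace_or_avoiding {α : Type u} [Finite α] (η : Type*) [Finite η] [Nonempty η]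
    (ρ : Type*) [Finite ρ] : ∀ (P : Type u) [Finite P], ∃ (J : Type) (_ : Fintype J),
      ∀ B : P → Set (J → Option α), (∃ p, ∃ V : Subspace η (Option α) J, ∀ z, V z ∈ B p) ∨
        ∃ W : Subspace ρ α J, ∀ w, (∃ i, w i = none) → ∀ p, liftOption W w ∉ B p := by
  induction ρ using Finite.induction_empty_option with
  | of_equiv e ih =>
    intro P _
    obtain ⟨J, _, hJ⟩ := ih P
    refine ⟨J, inferInstance, fun B => (hJ B).imp_right ?_⟩
    rintro ⟨W, hW⟩
    refine ⟨W.reindex e (.refl _) (.refl _), fun w hw p => ?_⟩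
    rw [liftOption_reindex_dirs]
    exact hW (w ∘ e) (by rwa [← e.exists_congr_right] at hw) p
  | h_empty => exact fun P _ => ⟨Empty, inferInstance, fun B =>
      .inr ⟨⟨Empty.elim, fun e => e.elim⟩, fun w ⟨i, _⟩ => i.elim⟩⟩
  | h_option ih =>
    intro P _
    obtain ⟨J, _, hJ⟩ := ih (α × P)
    obtain ⟨H, _, hH⟩ := Combinatorics.Subspace.exists_mono_in_high_dimension
      (Option α) (Set P) (η ⊕ J)
    refine ⟨H, inferInstance, fun B => ?_⟩
    obtain ⟨V, C, hV⟩ := hH fun w => {p | w ∈ B p}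
    have mem_B (x p) : V x ∈ B p ↔ p ∈ C := by rw [← hV x, Set.mem_ofPred_eq]
    obtain ⟨p, hp⟩ | hC := C.eq_empty_or_nonempty.symm
    · exact .inl ⟨p, compSubspace V (fixInr fun _ => none), fun z => by
        rwa [compSubspace_apply, mem_B]⟩
    · obtain ⟨⟨a, p⟩, V', hV'⟩ | ⟨W, hW⟩ := hJ fun ap =>
        {w | liftOption (mergeNone V) (Sum.elim (fun _ => some ap.1) w) ∈ B ap.2}
      · refine .inl ⟨p, compSubspace (compSubspace (liftOption (mergeNone V))
          (fixInl fun _ => some a)) V', fun z => ?_⟩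
        simpa using hV' z
      · refine .inr ⟨compSubspace (mergeNone V) (lineProdSubspace (.diagonal α Unit) W),
          fun w hw p => ?_⟩
        rw [liftOption_compSubspace, liftOption_lineProdSubspace_diagonal]
        cases hnone : w none with
        | none => simp [liftOption_mergeNone, mem_B, hC]
        | some a =>
          obtain ⟨_ | i, hi⟩ := hw
          · simp [hnone] at hi
          · exact hW (w ∘ some) ⟨i, hi⟩ (a, p)

end Ramsey

section Insensitive

variable {α ι η : Type*}

/-- The point of `ι → α` obtained from `x` by replacing each letter `none` by `a`. -/
def substNone (a : α) (x : ι → Option α) : ι → α := fun i => (x i).getD a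

/-- A subset of `ι → Option α` is `a`-insensitive if membership in it does not change when letters
`a` are replaced by `none` or vice versa. -/
def Insensitive (a : α) (E : Set (ι → Option α)) : Prop :=
  ∀ ⦃x y⦄, substNone a x = substNone a y → (x ∈ E ↔ y ∈ E)

lemma substNone_liftOption (a : α) (V : Subspace η α ι) (x : η → Option α) :
    substNone a (liftOption V x) = V (substNone a x) := by
  ext i
  cases h : V.idxFun i <;>
    simp [Combinatorics.Subspace.apply_def, liftOption, substNone, h]

lemma Insensitive.compl {a : α} {E : Set (ι → Option α)} (hE : Insensitive a E) :
    Insensitive a Eᶜ := fun _ _ h => not_congr (hE h)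

lemma Insensitive.preimage {a : α} {E : Set (ι → Option α)} (hE : Insensitive a E)
    (V : Subspace η (Option α) ι) : Insensitive a (V ⁻¹' E) := fun x y h => by
  refine hE (funext fun i => ?_)
  cases hi : V.idxFun i with
  | inl b => simp [substNone, Combinatorics.Subspace.apply_inl hi]
  | inr e => simpa [substNone, Combinatorics.Subspace.apply_inr hi] using congrFun h e

section Restrict

variable {p : ι → Prop}

/-- The word over `Option α` whose letters other than `none` are those of `t`. -/
noncomputable def extendNone (t : {i // p i} → α) (i : ι) : Option α :=
  if h : p i then some (t ⟨i, h⟩) else none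

/-- The subspace of `ι → Option α` in which the coordinates outside of `p` are fixed to be `none`
and the others vary in `V`. -/
noncomputable def extendNoneSubspace (V : Subspace η (Option α) {i // p i}) :
    Subspace η (Option α) ι where
  idxFun i := if h : p i then V.idxFun ⟨i, h⟩ else .inl none
  proper e := by
    obtain ⟨i, hi⟩ := V.proper e
    exact ⟨i, by simp [hi, i.2]⟩

lemma substNone_extendNoneSubspace (a : α) (V : Subspace η α {i // p i}) (z : η → Option α) :
    substNone a (extendNoneSubspace (liftOption V) z) =
      substNone a (extendNone (V (substNone a z))) := by
  rw [← substNone_liftOption]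
  ext i
  by_cases hi : p i <;> simp [substNone, extendNoneSubspace, extendNone,
    Combinatorics.Subspace.apply_def, hi]

end Restrict

section Density

lemma density_preimage_fst {X Y : Type*} [Finite X] [Finite Y] [Nonempty Y] (A : Set X) :
    density (Prod.fst ⁻¹' A : Set (X × Y)) = density A := by
  have := Fintype.ofFinite X
  rw [density_eq_expect_sections, density_eq_expect]
  refine expect_congr rfl fun x _ => ?_
  by_cases hx : x ∈ A <;> simp [hx]

lemma density_preimage_restrict [Finite α] [Nonempty α] [Finite ι] (p : ι → Prop)
    (A : Set ({i // p i} → α)) :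
    density {t : ι → α | (fun i : {i // p i} => t i) ∈ A} = density A :=
  (density_preimage_of_bijective (Equiv.piEquivPiSubtypeProd p fun _ => α).bijective
    (Prod.fst ⁻¹' A)).trans (density_preimage_fst A)

/-- Overwriting the letters of a random word other than `none` by independent random letters does
not change its distribution: swapping old and new letters is an involution. -/
lemma density_eq_expect_extendNone [Fintype α] [Nonempty α] [Fintype ι] (E : Set (ι → Option α)) :
    density E = 𝔼 x : ι → Option α,
      density {t : {i // x i ≠ none} → α | extendNone t ∈ E} := by
  let swap (xt : (ι → Option α) × (ι → α)) : (ι → Option α) × (ι → α) :=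
    (fun i => (xt.1 i).map fun _ => xt.2 i, fun i => (xt.1 i).getD (xt.2 i))
  have swap_involutive : Involutive swap := fun ⟨x, t⟩ => by
    ext i <;> cases h : x i <;> simp [swap, h]
  have extendNone_eq (x : ι → Option α) (t : ι → α) :
      extendNone (fun i : {i // x i ≠ none} => t i) = (swap (x, t)).1 := by
    ext1 i
    cases h : x i <;> simp [extendNone, swap, h]
  rw [← density_preimage_fst (Y := ι → α), ← density_preimage_of_bijective
    swap_involutive.bijective, density_eq_expect_sections]
  refine expect_congr rfl fun x _ => ?_
  rw [← density_preimage_restrict]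
  simp only [Set.mem_ofPred_eq, extendNone_eq, Set.mem_preimage]

lemma expect_prod_apply {β : Type*} [Fintype β] [Fintype ι] (f : β → ℝ) :
    𝔼 x : ι → β, ∏ i, f (x i) = (𝔼 b, f b) ^ Fintype.card ι := by
  simp only [Fintype.expect_eq_sum_div_card, ← Fintype.prod_sum, prod_const, Fintype.card_fun,
    Nat.cast_pow, div_pow, card_univ]

/-- Markov's inequality for `2 ^ (-M)`, where `M` is the number of letters other than `none`. -/
lemma density_card_ne_none_lt_le [Finite α] [Nonempty α] [Fintype ι] (N : ℕ) :
    density {x : ι → Option α | Fintype.card {i // x i ≠ none} < N} ≤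
      2 ^ N * (3 / 4) ^ Fintype.card ι := by
  have := Fintype.ofFinite α
  let weight (o : Option α) : ℝ := if o ≠ none then 1 / 2 else 1
  have prod_weight (x : ι → Option α) :
      ∏ i, weight (x i) = (1 / 2) ^ Fintype.card {i // x i ≠ none} := by
    simp only [weight, prod_ite, prod_const, one_pow, mul_one, Fintype.card_subtype]
  have expect_weight : 𝔼 o, weight o ≤ 3 / 4 := by
    have : (1 : ℝ) ≤ Fintype.card α := mod_cast Fintype.card_pos
    rw [Fintype.expect_eq_sum_div_card, Fintype.sum_option, div_le_iff₀ (by positivity)]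
    simp [weight]
    linarith
  calc density {x : ι → Option α | Fintype.card {i // x i ≠ none} < N}
    _ ≤ 𝔼 x : ι → Option α, 2 ^ N * ∏ i, weight (x i) := by
      rw [density_eq_expect]
      refine expect_le_expect fun x _ => ?_
      rw [prod_weight]
      split_ifs with hx
      · calc (1 : ℝ) = 2 ^ N * (1 / 2) ^ N := by rw [← mul_pow]; norm_num
          _ ≤ _ := by
            gcongr 2 ^ N * ?_
            exact pow_le_pow_of_le_one (by norm_num) (by norm_num) (le_of_lt hx)
      · positivity
    _ = 2 ^ N * (𝔼 o, weight o) ^ Fintype.card ι := by rw [← mul_expect, expect_prod_apply]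
    _ ≤ 2 ^ N * (3 / 4) ^ Fintype.card ι := by gcongr

lemma exists_subspace_subset_of_insensitive [Finite α] [Nonempty α]
    (h : LineFreeDensityBound α 0) (η : Type*) [Finite η] {δ : ℝ} (hδ : 0 < δ) :
    ∃ N : ℕ, ∀ (ι : Type) [Fintype ι], N ≤ Fintype.card ι → ∀ (a : α) (E : Set (ι → Option α)),
      Insensitive a E → δ ≤ density E → ∃ V : Subspace η (Option α) ι, ∀ z, V z ∈ E := by
  have := Fintype.ofFinite α
  obtain ⟨N, hN⟩ := exists_subspace_subset h η (δ / 2) (half_pos hδ)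
  obtain ⟨n, hn⟩ := exists_pow_lt_of_lt_one (show (0 : ℝ) < δ / 2 / 2 ^ N by positivity)
    (show (3 / 4 : ℝ) < 1 by norm_num)
  refine ⟨n, fun ι _ hι a E hE hδE => ?_⟩
  have tail : density {x : ι → Option α | Fintype.card {i // x i ≠ none} < N} < δ / 2 :=
    calc _ ≤ 2 ^ N * (3 / 4 : ℝ) ^ Fintype.card ι := density_card_ne_none_lt_le N
      _ ≤ 2 ^ N * (3 / 4 : ℝ) ^ n := by
        gcongr 2 ^ N * ?_
        exact pow_le_pow_of_le_one (by norm_num) (by norm_num) hι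
      _ < δ / 2 := by rwa [lt_div_iff₀' (by positivity)] at hn
  rw [density_eq_expect_extendNone] at hδE
  obtain ⟨x, hx, hδx⟩ : ∃ x : ι → Option α, N ≤ Fintype.card {i // x i ≠ none} ∧
      δ / 2 ≤ density {t : {i // x i ≠ none} → α | extendNone t ∈ E} := by
    by_contra! hsparse
    have rich := half_le_density_of_le_expect (fun x => density_le_one _) hδ hδE
    exact tail.not_ge <| rich.trans <| density_mono fun x hx =>
      lt_of_not_ge fun hN => (hsparse x hN).not_ge hx
  obtain ⟨V, hV⟩ := hN _ hx _ hδx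
  exact ⟨extendNoneSubspace (liftOption V), fun z =>
    (hE (substNone_extendNoneSubspace a V z)).2 (hV _)⟩

end Density

end Insensitive

section Tiling

variable {α ι κ J K η : Type*}

/-- A set is `η`-tiled if it is a finite disjoint union of subspaces with direction set `η`. -/
inductive Tiled (η : Type*) {α ι : Type*} : Set (ι → α) → Prop
  | empty : Tiled η ∅
  | range (V : Subspace η α ι) : Tiled η (Set.range V)
  | union {S T : Set (ι → α)} : Tiled η S → Tiled η T → Disjoint S T → Tiled η (S ∪ T)

namespace Tiled

lemma image {S : Set (ι → α)} (hS : Tiled η S) (U : Subspace ι α κ) : Tiled η (U '' S) := by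
  induction hS with
  | empty => simpa using empty
  | range V =>
    convert range (compSubspace U V) using 1
    ext x
    simp
  | union _ _ hdisj ihS ihT =>
    rw [Set.image_union]
    exact union ihS ihT (Set.disjoint_image_of_injective (subspace_injective U) hdisj)

lemma iUnion {X : Type*} [Finite X] {S : X → Set (ι → α)} (hS : ∀ x, Tiled η (S x))
    (hdisj : Pairwise (Disjoint on S)) : Tiled η (⋃ x, S x) := by
  have := Fintype.ofFinite X
  suffices ∀ F : Finset X, Tiled η (⋃ x ∈ F, S x) by simpa using this univ
  intro F
  induction F using Finset.induction_on with
  | empty => simpa using empty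
  | insert x F hx ih =>
    rw [Finset.set_biUnion_insert]
    refine union (hS x) ih (Set.disjoint_iUnion₂_right.2 fun y hy => hdisj ?_)
    rintro rfl
    exact hx hy

variable {S : Set (J ⊕ K → α)}

lemma of_sections [Finite (J → α)] (hS : ∀ x, Tiled η (Sum.elim x ⁻¹' S)) : Tiled η S := by
  convert iUnion (fun x => (hS x).image (fixInl x)) fun x x' hx => ?_ using 1
  · ext z
    simp only [coe_fixInl, Set.image_preimage_eq_inter_range, Set.mem_iUnion, Set.mem_inter_iff]
    exact ⟨fun hz => ⟨z ∘ .inl, hz, z ∘ .inr, by simp⟩, fun ⟨_, hz, _⟩ => hz⟩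
  · refine Set.disjoint_left.2 ?_
    rintro _ ⟨y, -, rfl⟩ ⟨y', -, h⟩
    exact hx (funext fun j => by simpa using (congrFun h (.inl j)).symm)

lemma of_sections' [Finite (K → α)] (hS : ∀ y, Tiled η ((Sum.elim · y) ⁻¹' S)) : Tiled η S := by
  convert iUnion (fun y => (hS y).image (fixInr y)) fun y y' hy => ?_ using 1
  · ext z
    simp only [coe_fixInr, Set.image_preimage_eq_inter_range, Set.mem_iUnion, Set.mem_inter_iff]
    exact ⟨fun hz => ⟨z ∘ .inr, hz, z ∘ .inl, by simp⟩, fun ⟨_, hz, _⟩ => hz⟩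
  · refine Set.disjoint_left.2 ?_
    rintro _ ⟨x, -, rfl⟩ ⟨x', -, h⟩
    exact hy (funext fun k => by simpa using (congrFun h (.inr k)).symm)

lemma density_inter_le [Finite α] [Nonempty α] [Finite ι] {S : Set (ι → α)} (hS : Tiled η S)
    {B E : Set (ι → α)} {δ γ : ℝ}
    (h : ∀ V : Subspace η α ι, density (V ⁻¹' B) ≤ δ * density (V ⁻¹' E) + γ) :
    density (B ∩ S) ≤ δ * density (E ∩ S) + γ * density S := by
  induction hS with
  | empty => simp
  | range V =>
    have := Finite.of_injective _ (subspace_injective V)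
    have hrange := density_inter_range (subspace_injective V) Set.univ
    rw [Set.univ_inter, Set.preimage_univ, density_univ, mul_one] at hrange
    rw [density_inter_range (subspace_injective V), density_inter_range (subspace_injective V),
      hrange]
    linarith [mul_le_mul_of_nonneg_left (h V)
      (show (0 : ℝ) ≤ Nat.card (η → α) / Nat.card (ι → α) by positivity)]
  | @union S T _ _ hdisj ihS ihT =>
    rw [Set.inter_union_distrib_left, Set.inter_union_distrib_left, density_union hdisj,
      density_union (hdisj.mono Set.inter_subset_right Set.inter_subset_right),
      density_union (hdisj.mono Set.inter_subset_right Set.inter_subset_right)]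
    linarith

end Tiled

/-- In high dimension every `a`-insensitive set is tiled, up to a set of density at most `t`. -/
def TileableUpTo (η : Type*) (a : α) (t : ℝ) : Prop :=
  ∃ N : ℕ, ∀ (ι : Type) [Fintype ι], N ≤ Fintype.card ι → ∀ E : Set (ι → Option α),
    Insensitive a E → ∃ S ⊆ E, Tiled η S ∧ density (E \ S) ≤ t

variable [Finite α] {a : α} {β : ℝ}

lemma exists_tiled_subset_of_insensitive [Nonempty α] (h : LineFreeDensityBound α 0)
    (η : Type*) [Finite η] (a : α) (hβ : 0 < β) :
    ∃ (J : Type) (_ : Fintype J) (c : ℝ), 0 < c ∧ ∀ E : Set (J → Option α), Insensitive a E →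
      ∃ R ⊆ E, Tiled η R ∧ c * (density E - β) ≤ density R := by
  obtain ⟨N, hN⟩ := exists_subspace_subset_of_insensitive h η hβ
  refine ⟨Fin N, inferInstance, 1 / Nat.card (Fin N → Option α), by
    have : 0 < Nat.card (Fin N → Option α) := Nat.card_pos
    positivity, fun E hE => ?_⟩
  by_cases hEβ : β ≤ density E
  · obtain ⟨V, hV⟩ := hN _ (by simp) a E hE hEβ
    refine ⟨Set.range V, Set.range_subset_iff.2 hV, .range V, ?_⟩
    have range_card : (1 : ℝ) ≤ (Set.range V).ncard := mod_cast
      (Set.ncard_pos (Set.toFinite _)).2 (Set.range_nonempty V)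
    calc _ ≤ 1 / (Nat.card (Fin N → Option α) : ℝ) * 1 := by
          gcongr
          linarith [density_le_one E]
      _ ≤ density (Set.range V) := by
          rw [mul_one, density]
          gcongr
  · refine ⟨∅, Set.empty_subset E, .empty, ?_⟩
    rw [density_empty]
    exact mul_nonpos_of_nonneg_of_nonpos (by positivity) (by linarith)

lemma exists_tiled_subset_of_sections_insensitive [Finite J] [Finite K] {c : ℝ}
    (hJ : ∀ E : Set (J → Option α), Insensitive a E →
      ∃ R ⊆ E, Tiled η R ∧ c * (density E - β) ≤ density R)
    {L : Set (J ⊕ K → Option α)} (hL : ∀ y, Insensitive a ((Sum.elim · y) ⁻¹' L)) :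
    ∃ R ⊆ L, Tiled η R ∧ c * (density L - β) ≤ density R := by
  have := Fintype.ofFinite α
  have := Fintype.ofFinite K
  choose R hRL hR hcR using fun y => hJ _ (hL y)
  refine ⟨{z | z ∘ Sum.inl ∈ R (z ∘ Sum.inr)}, fun z hz => by simpa using hRL _ hz,
    .of_sections' hR, ?_⟩
  rw [density_eq_expect_elim' L, density_eq_expect_elim' {z | z ∘ Sum.inl ∈ R (z ∘ Sum.inr)},
    ← Fintype.expect_const (ι := K → Option α) β, ← expect_sub_distrib, mul_expect]
  exact expect_le_expect fun y _ => hcR y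

lemma exists_tiled_subset_of_sections_tileable [Finite J] [Finite K] {t : ℝ}
    (hK : ∀ E : Set (K → Option α), Insensitive a E → ∃ S ⊆ E, Tiled η S ∧ density (E \ S) ≤ t)
    {E : Set (J ⊕ K → Option α)} (hE : Insensitive a E) :
    ∃ S ⊆ E, Tiled η S ∧ density (E \ S) ≤ t ∧
      ∀ y, Insensitive a ((Sum.elim · y) ⁻¹' (E \ S)) := by
  choose! T hTE hT htT using hK
  have hsection (x : J → Option α) : Insensitive a (Sum.elim x ⁻¹' E) := by
    simpa using hE.preimage (fixInl x)
  refine ⟨{z | z ∘ Sum.inr ∈ T (Sum.elim (z ∘ Sum.inl) ⁻¹' E)}, fun z hz => by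
    simpa using hTE _ (hsection _) hz, .of_sections fun x => hT _ (hsection x), ?_, ?_⟩
  · have := Fintype.ofFinite α
    have := Fintype.ofFinite J
    rw [density_eq_expect_elim]
    exact expect_le univ_nonempty fun x _ => htT _ (hsection x)
  · intro y x x' hxx'
    have section_eq : Sum.elim x ⁻¹' E = Sum.elim x' ⁻¹' E := by
      ext y
      refine hE (funext fun i => ?_)
      cases i with
      | inl j => exact congrFun hxx' j
      | inr k => rfl
    have mem_iff : Sum.elim x y ∈ E ↔ Sum.elim x' y ∈ E := Set.ext_iff.1 section_eq y
    simp [section_eq, mem_iff]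

lemma TileableUpTo.improve [Nonempty α] (h : LineFreeDensityBound α 0) (η : Type*) [Finite η]
    (a : α) (hβ : 0 < β) :
    ∃ c > 0, ∀ t, TileableUpTo η a t → TileableUpTo η a (max β (t - c)) := by
  obtain ⟨J, _, c, hc, hJ⟩ := exists_tiled_subset_of_insensitive h η a (half_pos hβ)
  refine ⟨c * (β / 2), by positivity, fun t ⟨N, hN⟩ => ⟨Fintype.card J + N, fun ι _ hι E hE => ?_⟩⟩
  obtain ⟨K, _, U, hK, hU⟩ := exists_bijective_subspace (Option α) hι
  obtain ⟨S, hSE, hS, htS, hL⟩ := exists_tiled_subset_of_sections_tileable (hN K hK)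
    (hE.preimage U)
  obtain ⟨R, hRL, hR, hcR⟩ := exists_tiled_subset_of_sections_insensitive hJ hL
  refine ⟨U '' (S ∪ R), Set.image_subset_iff.2 (Set.union_subset hSE (hRL.trans Set.sdiff_subset)),
    (hS.union hR (Set.disjoint_sdiff_right.mono_right hRL)).image U, ?_⟩
  have leftover : density (E \ U '' (S ∪ R)) + density R = density (U ⁻¹' E \ S) := by
    rw [← density_preimage_of_bijective hU, Set.preimage_sdiff, Set.preimage_image_eq _ hU.1,
      ← Set.sdiff_sdiff, ← density_inter_add_diff (U ⁻¹' E \ S) R, Set.inter_eq_right.2 hRL]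
    ring
  have := density_nonneg R
  by_cases hβL : density (U ⁻¹' E \ S) ≤ β
  · exact le_max_of_le_left (by linarith)
  · have : c * (β / 2) ≤ c * (density (U ⁻¹' E \ S) - β / 2) := by
      gcongr
      linarith
    exact le_max_of_le_right (by linarith)

theorem tileableUpTo_of_pos [Nonempty α] (h : LineFreeDensityBound α 0) (η : Type*) [Finite η]
    (a : α) (hβ : 0 < β) : TileableUpTo η a β := by
  obtain ⟨c, hc, hstep⟩ := TileableUpTo.improve h η a hβ
  have iterate (n : ℕ) : TileableUpTo η a (max β (1 - n * c)) := by
    induction n with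
    | zero => exact ⟨0, fun ι _ _ E _ => ⟨∅, Set.empty_subset E, .empty, by
        simpa using .inr (density_le_one E)⟩⟩
    | succ n ih =>
      convert hstep _ ih using 1
      push_cast
      rcases le_total β (1 - n * c) with hn | hn
      · rw [max_eq_right hn]; ring_nf
      · rw [max_eq_left hn, max_eq_left, max_eq_left] <;> linarith
  obtain ⟨n, hn⟩ := exists_nat_gt (1 / c)
  rw [div_lt_iff₀ hc] at hn
  simpa [max_eq_left (show 1 - n * c ≤ β by linarith)] using iterate n

end Tiling

section RelativeDensity

variable {α : Type*} [Finite α] [Nonempty α] {δ : ℝ}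

/-- Tiling the insensitive sets one after the other by subspaces of large dimension reduces the
claim to the bound for the whole cube. -/
lemma density_inter_insensitive_le (h₀ : LineFreeDensityBound α 0)
    (h : LineFreeDensityBound (Option α) δ) (hδ : 0 ≤ δ) (F : Finset α) :
    ∀ β > 0, ∃ N : ℕ, ∀ (ι : Type) [Fintype ι], N ≤ Fintype.card ι →
      ∀ A : Set (ι → Option α), LineFree A → ∀ E : α → Set (ι → Option α),
        (∀ a, Insensitive a (E a)) →
          density (A ∩ ⋂ a ∈ F, E a) ≤ δ * density (⋂ a ∈ F, E a) + β := by
  induction F using Finset.induction_on with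
  | empty =>
    intro β hβ
    obtain ⟨N, hN⟩ := h β hβ
    exact ⟨N, fun ι _ hι A hA _ _ => by simpa using hN ι hι A hA⟩
  | insert b F _ ih =>
    intro β hβ
    obtain ⟨m, hm⟩ := ih (β / 2) (half_pos hβ)
    obtain ⟨N, hN⟩ := tileableUpTo_of_pos h₀ (Fin m) b (half_pos hβ)
    refine ⟨N, fun ι _ hι A hA E hE => ?_⟩
    obtain ⟨S, hSE, hS, hβS⟩ := hN ι hι (E b) (hE b)
    rw [Finset.set_biInter_insert]
    set X := ⋂ a ∈ F, E a with hX
    have tile_bound (V : Subspace (Fin m) (Option α) ι) :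
        density (V ⁻¹' (A ∩ X)) ≤ δ * density (V ⁻¹' X) + β / 2 := by
      simpa only [hX, Set.preimage_inter, Set.preimage_iInter₂] using hm (Fin m) (by simp) _
        (hA.preimage V) (fun a => V ⁻¹' E a) fun a => (hE a).preimage V
    calc density (A ∩ (E b ∩ X))
      _ = density (A ∩ (E b ∩ X) ∩ S) + density ((A ∩ (E b ∩ X)) \ S) :=
        (density_inter_add_diff _ _).symm
      _ ≤ density (A ∩ X ∩ S) + density (E b \ S) := by
        gcongr <;> refine density_mono ?_
        · exact fun x hx => ⟨⟨hx.1.1, hx.1.2.2⟩, hx.2⟩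
        · exact fun x hx => ⟨hx.1.2.1, hx.2⟩
      _ ≤ δ * density (X ∩ S) + β / 2 * density S + β / 2 := by
        gcongr
        exact hS.density_inter_le tile_bound
      _ ≤ δ * density (E b ∩ X) + β / 2 * 1 + β / 2 := by
        gcongr
        · exact density_mono fun x hx => ⟨hSE hx.2, hx.1⟩
        · exact density_le_one S
      _ = δ * density (E b ∩ X) + β := by ring

lemma density_diff_insensitive_le (h₀ : LineFreeDensityBound α 0)
    (h : LineFreeDensityBound (Option α) δ) (hδ : 0 ≤ δ) (F : Finset α) :
    ∀ β > 0, ∃ N : ℕ, ∀ (ι : Type) [Fintype ι], N ≤ Fintype.card ι →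
      ∀ A : Set (ι → Option α), LineFree A → ∀ D : α → Set (ι → Option α),
        (∀ a, Insensitive a (D a)) →
          density (A \ ⋂ a ∈ F, D a) + δ * density (⋂ a ∈ F, D a) ≤ δ + β := by
  induction F using Finset.induction_on with
  | empty => exact fun β hβ => ⟨0, fun ι _ _ A _ D _ => by simp [hβ.le]⟩
  | insert b F hb ih =>
    intro β hβ
    obtain ⟨N, hN⟩ := ih (β / 2) (half_pos hβ)
    obtain ⟨N', hN'⟩ := density_inter_insensitive_le h₀ h hδ (insert b F) (β / 2) (half_pos hβ)
    refine ⟨max N N', fun ι _ hι A hA D hD => ?_⟩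
    have diff_F := hN ι (le_of_max_le_left hι) A hA D hD
    have inter_compl := hN' ι (le_of_max_le_right hι) A hA (update D b (D b)ᶜ) fun a => by
      obtain rfl | hab := eq_or_ne a b
      · simpa using (hD a).compl
      · simpa [hab] using hD a
    rw [Finset.set_biInter_insert_update _ hb] at inter_compl
    rw [Finset.set_biInter_insert]
    set X := ⋂ a ∈ F, D a
    have split_diff : density (A \ (D b ∩ X)) = density (A \ X) + density (A ∩ ((D b)ᶜ ∩ X)) := by
      rw [← density_union (Set.disjoint_left.2 fun x hx hx' => hx.2 hx'.2.2)]
      congr 1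
      ext x
      simp only [Set.mem_sdiff, Set.mem_inter_iff, Set.mem_union, Set.mem_compl_iff]
      tauto
    have split_X : density X = density (D b ∩ X) + density ((D b)ᶜ ∩ X) := by
      rw [← density_inter_add_diff X (D b), Set.inter_comm, Set.sdiff_eq, Set.inter_comm X]
    rw [split_X, mul_add] at diff_F
    linarith

lemma density_add_mul_density_iInter_le (h₀ : LineFreeDensityBound α 0)
    (h : LineFreeDensityBound (Option α) δ) (hδ : 0 ≤ δ) {β : ℝ} (hβ : 0 < β) :
    ∃ N : ℕ, ∀ (ι : Type) [Fintype ι], N ≤ Fintype.card ι →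
      ∀ A : Set (ι → Option α), LineFree A → ∀ D : α → Set (ι → Option α),
        (∀ a, Insensitive a (D a)) → Disjoint A (⋂ a, D a) →
          density A + δ * density (⋂ a, D a) ≤ δ + β := by
  have := Fintype.ofFinite α
  obtain ⟨N, hN⟩ := density_diff_insensitive_le h₀ h hδ univ β hβ
  refine ⟨N, fun ι _ hι A hA D hD hdisj => ?_⟩
  simpa [hdisj.sdiff_eq_left] using hN ι hι A hA D hD

end RelativeDensity

section Decrement

variable {α J J₀ K η : Type*} {A : Set (J ⊕ K → Option α)} {θ δ : ℝ}

lemma LineFree.notMem_of_forall_substNone_mem {A : Set (J → Option α)} (hA : LineFree A)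
    {w : J → Option α} (hw : ∃ j, w j = none) (h : ∀ a, some ∘ substNone a w ∈ A) : w ∉ A := by
  intro hwA
  obtain ⟨o, ho⟩ := hA ⟨fun j => (w j).map some, hw.imp fun j hj => by simp [hj]⟩
  refine ho ?_
  cases o with
  | none =>
    convert hwA using 2
    ext1 j
    cases h : w j <;> simp [h]
  | some a =>
    convert h a using 2
    ext1 j
    cases h : w j <;> simp [substNone, h]

/-- A word with a letter `none` describes a line over the alphabet `α`, with `none` as the
variable; it is `θ`-dense if this line lies in the sections of `A` at a set of points of density
at least `θ`. -/
def denseWords (A : Set (J ⊕ K → Option α)) (θ : ℝ) : Set (J → Option α) :=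
  {w | (∃ j, w j = none) ∧ θ ≤ density {y | ∀ a, Sum.elim (some ∘ substNone a w) y ∈ A}}

variable [Nonempty α]

lemma exists_density_section_lt_of_avoiding [Fintype α] [Fintype J₀]
    (hJ₀ : ∀ R : (J₀ → α) → Set (K → Option α), δ ≤ 𝔼 x, density (R x) →
      ∃ l : Line α J₀, θ ≤ density (⋂ a, R (l a)))
    {W : Subspace J₀ α J} (hW : ∀ w, (∃ i, w i = none) → liftOption W w ∉ denseWords A θ) :
    ∃ x, density (Sum.elim x ⁻¹' A) < δ := by
  by_contra! hA
  obtain ⟨l, hl⟩ := hJ₀ (fun x => Sum.elim (some ∘ W x) ⁻¹' A)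
    (le_expect univ_nonempty fun x _ => hA _)
  refine hW l.idxFun l.proper ⟨?_, ?_⟩
  · obtain ⟨i, hi⟩ := l.proper
    exact (W.proper i).imp fun j hj => by
      simp [liftOption, Combinatorics.Subspace.apply_def, hj, hi]
  · have points (a : α) : substNone a (liftOption W l.idxFun) = W (l a) :=
      substNone_liftOption a W l.idxFun
    refine hl.trans_eq (congrArg density ?_)
    ext y
    simp [points]

lemma exists_density_section_le_of_forall_mem_denseWords [Finite α] [Finite η] [Finite K]
    (hA : LineFree A) (hδ : 0 ≤ δ) {β : ℝ}
    (hη : ∀ B : Set (η → Option α), LineFree B → ∀ D : α → Set (η → Option α),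
      (∀ a, Insensitive a (D a)) → Disjoint B (⋂ a, D a) →
        density B + δ * density (⋂ a, D a) ≤ δ + β)
    {V : Subspace η (Option α) J} (hV : ∀ z, V z ∈ denseWords A θ) :
    ∃ x, density (Sum.elim x ⁻¹' A) ≤ δ + β - δ * θ := by
  have := Fintype.ofFinite α
  have := Fintype.ofFinite η
  have := Fintype.ofFinite K
  let D (y : K → Option α) (a : α) : Set (η → Option α) :=
    {z | Sum.elim (some ∘ substNone a (V z)) y ∈ A}
  have section_bound (y : K → Option α) :
      density {z | Sum.elim (V z) y ∈ A} + δ * density (⋂ a, D y a) ≤ δ + β := by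
    have hAy : LineFree ((Sum.elim · y) ⁻¹' A) := by simpa using hA.preimage (fixInr y)
    refine hη _ (hAy.preimage V) _ (fun a => ?_) (Set.disjoint_left.2 fun z hz hzD => ?_)
    · have : Insensitive a {w : J → Option α | Sum.elim (some ∘ substNone a w) y ∈ A} :=
        fun w w' h => by simp [h]
      exact this.preimage V
    · exact hAy.notMem_of_forall_substNone_mem (hV z).1 (Set.mem_iInter.1 hzD) hz
  obtain ⟨z, -, hz⟩ := exists_le_of_expect_le univ_nonempty <| show
      𝔼 z, (density (Sum.elim (V z) ⁻¹' A) + δ * θ) ≤ δ + β from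
    calc 𝔼 z, (density (Sum.elim (V z) ⁻¹' A) + δ * θ)
      _ ≤ 𝔼 z, (density (Sum.elim (V z) ⁻¹' A) + δ * density {y | z ∈ ⋂ a, D y a}) := by
        refine expect_le_expect fun z _ => ?_
        gcongr
        simpa [D] using (hV z).2
      _ = 𝔼 y, (density {z | Sum.elim (V z) y ∈ A} + δ * density (⋂ a, D y a)) := by
        rw [expect_add_distrib, expect_add_distrib, ← mul_expect, ← mul_expect,
          expect_density_comm, ← expect_density_comm fun y => ⋂ a, D y a]
        rfl
      _ ≤ δ + β := expect_le univ_nonempty fun y _ => section_bound y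
  exact ⟨V z, by linarith⟩

variable [Finite α]

lemma exists_sparse_section (h₀ : LineFreeDensityBound α 0)
    (h : LineFreeDensityBound (Option α) δ) (hδ : 0 < δ) :
    ∃ (J : Type) (_ : Fintype J) (δ' : ℝ), 0 ≤ δ' ∧ δ' < δ ∧
      ∀ (K : Type) [Fintype K] (A : Set (J ⊕ K → Option α)), LineFree A →
        ∃ x, density (Sum.elim x ⁻¹' A) ≤ δ' := by
  have := Fintype.ofFinite α
  obtain ⟨J₀, _, θ, hθ, hJ₀⟩ := exists_dense_line h₀ (half_pos hδ)
  obtain ⟨m, hm⟩ := density_add_mul_density_iInter_le h₀ h hδ.le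
    (show 0 < δ * θ / 2 by positivity)
  obtain ⟨J, _, hJ⟩ := exists_subspace_or_avoiding (α := α) (Fin (m + 1)) J₀ PUnit
  refine ⟨J, inferInstance, max (δ / 2) (δ - δ * θ / 2), by positivity,
    max_lt (half_lt_self hδ) (sub_lt_self δ (by positivity)), fun K _ A hA => ?_⟩
  obtain ⟨-, V, hV⟩ | ⟨W, hW⟩ := hJ fun _ => denseWords A θ
  · obtain ⟨x, hx⟩ := exists_density_section_le_of_forall_mem_denseWords hA hδ.le
      (hm (Fin (m + 1)) (by simp)) hV
    exact ⟨x, le_max_of_le_right (by linarith)⟩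
  · obtain ⟨x, hx⟩ := exists_density_section_lt_of_avoiding (fun R => hJ₀ R)
      fun w hw => hW w hw ⟨⟩
    exact ⟨x, le_max_of_le_left hx.le⟩

lemma LineFreeDensityBound.decrement (h₀ : LineFreeDensityBound α 0)
    (h : LineFreeDensityBound (Option α) δ) (hδ : 0 < δ) :
    ∃ δ', 0 ≤ δ' ∧ δ' < δ ∧ LineFreeDensityBound (Option α) δ' := by
  have := Fintype.ofFinite α
  obtain ⟨J, _, δ', hδ', hlt, hJ⟩ := exists_sparse_section h₀ h hδ
  let c : ℝ := Fintype.card (J → Option α)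
  have hc : 1 ≤ c := Nat.one_le_cast.2 Fintype.card_pos
  have gain_le : (δ - δ') / c ≤ δ - δ' := div_le_self (sub_nonneg.2 hlt.le) hc
  have gain_pos : 0 < (δ - δ') / c := div_pos (sub_pos.2 hlt) (by linarith)
  refine ⟨δ - (δ - δ') / c, by linarith, by linarith, fun γ hγ => ?_⟩
  obtain ⟨N, hN⟩ := h γ hγ
  refine ⟨Fintype.card J + N, fun ι _ hι A hA => ?_⟩
  obtain ⟨K, _, U, hK, hU⟩ := exists_bijective_subspace (Option α) hι
  rw [← density_preimage_of_bijective hU, density_eq_expect_elim]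
  calc 𝔼 x, density (Sum.elim x ⁻¹' (U ⁻¹' A))
    _ ≤ δ + γ - (δ + γ - δ') / c := by
      refine expect_le_sub_of_exists_le (fun x => hN K hK _ ?_) (hJ K _ (hA.preimage U))
      simpa using (hA.preimage U).preimage (fixInl x)
    _ = δ - (δ - δ') / c + γ - γ / c := by ring
    _ ≤ δ - (δ - δ') / c + γ := sub_le_self _ (by positivity)

end Decrement

section DensityHalesJewettTheorem

variable {α α' : Type*}

lemma LineFree.eq_empty [Subsingleton α] {ι : Type*} [Nonempty ι] {A : Set (ι → α)}
    (hA : LineFree A) : A = ∅ := by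
  obtain ⟨a, ha⟩ := hA (.diagonal α ι)
  refine Set.eq_empty_of_forall_notMem fun x hx => ha ?_
  rwa [Subsingleton.elim (Line.diagonal α ι a) x]

lemma lineFreeDensityBound_of_subsingleton [Subsingleton α] : LineFreeDensityBound α 0 :=
  fun γ hγ => ⟨1, fun ι _ hι A hA => by
    have : Nonempty ι := Fintype.card_pos_iff.1 hι
    simp [hA.eq_empty, hγ.le]⟩

lemma LineFreeDensityBound.congr {δ : ℝ} (h : LineFreeDensityBound α δ) (e : α ≃ α') :
    LineFreeDensityBound α' δ := fun γ hγ => by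
  obtain ⟨N, hN⟩ := h γ hγ
  refine ⟨N, fun ι _ hι A hA => ?_⟩
  rw [← density_preimage_of_bijective (e.bijective.comp_left : Bijective fun x : ι → α => e ∘ x)]
  refine hN ι hι _ fun l => ?_
  obtain ⟨b, hb⟩ := hA (l.map e)
  exact ⟨e.symm b, by rwa [Set.mem_preimage, ← Line.map_apply, e.apply_symm_apply]⟩

lemma LineFreeDensityBound.option [Finite α] [Nonempty α] (h₀ : LineFreeDensityBound α 0) :
    LineFreeDensityBound (Option α) 0 := by
  let s : Set ℝ := {δ | 0 ≤ δ ∧ LineFreeDensityBound (Option α) δ}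
  have s_nonempty : s.Nonempty := ⟨1, zero_le_one, fun γ hγ =>
    ⟨0, fun ι _ _ A _ => (density_le_one A).trans (by linarith)⟩⟩
  have sInf_nonneg : 0 ≤ sInf s := Real.sInf_nonneg fun δ hδ => hδ.1
  have bound_sInf : LineFreeDensityBound (Option α) (sInf s) := fun γ hγ => by
    obtain ⟨δ, ⟨-, hδ⟩, hlt⟩ := exists_lt_of_csInf_lt s_nonempty
      (show sInf s < sInf s + γ / 2 by linarith)
    obtain ⟨N, hN⟩ := hδ (γ / 2) (half_pos hγ)
    exact ⟨N, fun ι _ hι A hA => (hN ι hι A hA).trans (by linarith)⟩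
  obtain heq | hpos := sInf_nonneg.eq_or_lt
  · rwa [← heq] at bound_sInf
  · obtain ⟨δ, hδ, hlt, hbound⟩ := LineFreeDensityBound.decrement h₀ bound_sInf hpos
    exact absurd hlt <| not_lt.2 <|
      csInf_le ⟨0, fun _ h => h.1⟩ (show δ ∈ s from ⟨hδ, hbound⟩)

theorem densityHalesJewett (α : Type*) [Finite α] : LineFreeDensityBound α 0 := by
  induction α using Finite.induction_empty_option with
  | of_equiv e ih => exact ih.congr e
  | h_empty => exact lineFreeDensityBound_of_subsingleton
  | @h_option α _ ih =>
    cases isEmpty_or_nonempty α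
    · exact lineFreeDensityBound_of_subsingleton
    · exact ih.option

end DensityHalesJewettTheorem

section Configurations

lemma density_eq_expect_update {J X : Type*} [Fintype J] [Fintype X] [Nonempty X] (j : J)
    (E : Set (J → X)) : density E = 𝔼 y, density {t | update y j t ∈ E} := by
  let swap (yt : (J → X) × X) : (J → X) × X := (update yt.1 j yt.2, yt.1 j)
  have swap_involutive : Involutive swap := fun ⟨y, t⟩ => by simp [swap]
  rw [← density_preimage_fst (Y := X), ← density_preimage_of_bijective swap_involutive.bijective,
    density_eq_expect_sections]
  rfl

lemma exists_sum_map_update_eq {J X B : Type*} [AddMonoid B] {L : List J} (hL : L.Nodup) {j : J}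
    (hj : j ∈ L) (f : J → X → B) (s : J → X) :
    ∃ u v, ∀ t, (L.map fun i => f i (update s j t i)).sum = u + f j t + v := by
  obtain ⟨L₁, L₂, rfl⟩ := List.append_of_mem hj
  have hj₁ : j ∉ L₁ := fun h => (List.nodup_append.1 hL).2.2 j h j (by simp) rfl
  have hj₂ : j ∉ L₂ := (List.nodup_cons.1 (List.nodup_append.1 hL).2.1).1
  have map_update {L : List J} (h : j ∉ L) (t : X) :
      (L.map fun i => f i (update s j t i)) = L.map fun i => f i (s i) :=
    List.map_congr_left fun i hi => by rw [update_of_ne (ne_of_mem_of_not_mem hi h)]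
  refine ⟨(L₁.map fun i => f i (s i)).sum, (L₂.map fun i => f i (s i)).sum, fun t => ?_⟩
  simp [map_update hj₁, map_update hj₂, add_assoc]

variable {J κ G : Type*} [AddGroup G] {S : AddSubgroup (κ → G)} [Fintype J]

/-- The point of `G` parametrized by a word `w` over the alphabet `κ`, a base point and one
configuration in `S` for each position: the letter `w j` selects an entry of the `j`-th
configuration. -/
noncomputable def wordPoint (w : J → κ) (y : G × (J → S)) : G :=
  y.1 + (univ.toList.map fun j => (y.2 j : κ → G) (w j)).sum

/-- The configuration in `S` selected from `s` by a symbol of the word of a line: `s` itself for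
the variable, and the constant configuration at the entry `s a` for the letter `a`. -/
def symbolConfiguration (hS : ∀ x, const κ x ∈ S) (o : Option κ) (s : S) : S :=
  o.elim s fun a => ⟨const κ ((s : κ → G) a), hS _⟩

@[simp] lemma symbolConfiguration_none (hS : ∀ x, const κ x ∈ S) (s : S) :
    symbolConfiguration hS none s = s := rfl

/-- The configuration in `S` consisting of the points parametrized by the words on the line `l`. -/
noncomputable def lineConfiguration (hS : ∀ x, const κ x ∈ S) (l : Line κ J) (y : G × (J → S)) :
    S :=
  ⟨const κ y.1, hS _⟩ +
    (univ.toList.map fun j => symbolConfiguration hS (l.idxFun j) (y.2 j)).sum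

lemma lineConfiguration_apply (hS : ∀ x, const κ x ∈ S) (l : Line κ J) (y : G × (J → S)) (i : κ) :
    (lineConfiguration hS l y : κ → G) i = wordPoint (l i) y := by
  simp only [lineConfiguration, wordPoint, AddSubgroup.coe_add, AddSubgroup.val_list_sum,
    Pi.add_apply, Pi.list_sum_apply, List.map_map, const_apply]
  congr 3
  ext1 j
  cases h : l.idxFun j <;> simp [symbolConfiguration, h]

variable [Finite κ] [Finite G]

lemma density_preimage_wordPoint (w : J → κ) (A : Set G) :
    density (wordPoint (S := S) w ⁻¹' A) = density A := by
  have := Fintype.ofFinite S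
  rw [density_eq_expect_equiv (Equiv.prodComm _ _),
    ← Fintype.expect_const (ι := J → S) (density A)]
  refine expect_congr rfl fun s _ => ?_
  exact density_preimage_of_bijective
    (Equiv.addRight (univ.toList.map fun j => (s j : κ → G) (w j)).sum).bijective A

lemma density_preimage_lineConfiguration (hS : ∀ x, const κ x ∈ S) (l : Line κ J) (B : Set S) :
    density (lineConfiguration hS l ⁻¹' B) = density B := by
  have := Fintype.ofFinite G
  have := Fintype.ofFinite S
  obtain ⟨j, hj⟩ := l.proper
  rw [density_eq_expect_sections, ← Fintype.expect_const (ι := G) (density B)]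
  refine expect_congr rfl fun x _ => ?_
  rw [density_eq_expect_update j, ← Fintype.expect_const (ι := J → S) (density B)]
  refine expect_congr rfl fun s _ => ?_
  obtain ⟨u, v, huv⟩ := exists_sum_map_update_eq univ.nodup_toList (mem_toList.2 (mem_univ j))
    (fun i => symbolConfiguration hS (l.idxFun i)) s
  rw [← density_preimage_of_bijective
    ((Equiv.addLeft ((⟨const κ x, hS x⟩ : S) + u)).trans (Equiv.addRight v)).bijective B]
  congr 1
  ext t
  simp [lineConfiguration, huv, hj, add_assoc]

theorem exists_le_density_configurations (κ : Type*) [Finite κ] [Nonempty κ] {ε : ℝ} (hε : 0 < ε) :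
    ∃ γ > 0, ∀ (G : Type*) [Finite G] [AddGroup G] (S : AddSubgroup (κ → G)),
      (∀ x, const κ x ∈ S) → ∀ A : Set G, ε ≤ density A →
        γ ≤ density {s : S | ∀ i, (s : κ → G) i ∈ A} := by
  have := Fintype.ofFinite κ
  obtain ⟨J, _, θ, hθ, hline⟩ := exists_dense_line (densityHalesJewett κ) hε
  refine ⟨θ, hθ, fun G _ _ S hS A hA => ?_⟩
  have := Fintype.ofFinite (G × (J → S))
  obtain ⟨l, hl⟩ := hline (fun w => wordPoint (S := S) w ⁻¹' A) (by
    simpa only [density_preimage_wordPoint] using le_expect univ_nonempty fun _ _ => hA)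
  rw [← density_preimage_lineConfiguration hS l]
  refine hl.trans_eq (congrArg density ?_)
  ext y
  simp [lineConfiguration_apply]

end Configurations

end DensityHalesJewett

theorem stmt4_general (κ : Type*) [Fintype κ] [Nonempty κ] (ε : ℝ) (hε : 0 < ε) :
    ∃ γ : ℝ, 0 < γ ∧
      ∀ (G : Type*) [Fintype G] [AddGroup G] (S : AddSubgroup (κ → G)),
        (∀ x : G, (fun _ => x) ∈ S) →
        ∀ A : Finset G, ε * (Fintype.card G : ℝ) ≤ (A.card : ℝ) →
          γ * ((univ.filter (fun x : κ → G => x ∈ S)).card : ℝ)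
            ≤ ((univ.filter (fun x : κ → G => x ∈ S ∧ ∀ j, x j ∈ A)).card : ℝ) := by
  obtain ⟨γ, hγ, h⟩ := DensityHalesJewett.exists_le_density_configurations κ hε
  refine ⟨γ, hγ, fun G _ _ S hS A hA => ?_⟩
  have card_G : (0 : ℝ) < Fintype.card G := mod_cast Fintype.card_pos
  have card_S : (0 : ℝ) < (univ.filter (fun x : κ → G => x ∈ S)).card :=
    mod_cast card_pos.2 ⟨0, by simp [S.zero_mem]⟩
  have dense_A : ε ≤ DensityHalesJewett.density (A : Set G) := by
    rwa [DensityHalesJewett.density_coe_finset, le_div_iff₀ card_G]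
  rw [← le_div_iff₀ card_S]
  have := (h G S hS A dense_A).trans_eq
    (DensityHalesJewett.density_subtype (· ∈ S) fun x => ∀ j, x j ∈ (A : Set G))
  simpa only [mem_coe] using this

/-- V-property (Varnavides/supersaturation) for configuration systems arising from
invariant group homomorphisms on finite abelian groups. -/
theorem stmt4 (k : ℕ) (hk : 1 ≤ k) (ε : ℝ) (hε : 0 < ε) :
    ∃ γ : ℝ, 0 < γ ∧
      ∀ (G : Type) [Fintype G] [AddCommGroup G]
        (M : (Fin k → G) →+ (Fin k → G)),
        (∀ x : G, M (fun _ => x) = 0) →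
        ∀ A : Finset G, ε * (Fintype.card G : ℝ) < (A.card : ℝ) →
          γ * ((Finset.univ.filter (fun x : Fin k → G => M x = 0)).card : ℝ)
            ≤ ((Finset.univ.filter (fun x : Fin k → G =>
                  M x = 0 ∧ ∀ j, x j ∈ A)).card : ℝ) := by
  have : Nonempty (Fin k) := Fin.pos_iff_nonempty.1 hk
  obtain ⟨γ, hγ, h⟩ := stmt4_general (Fin k) ε hε
  exact ⟨γ, hγ, fun G _ _ M hM A hA => by
    convert h G M.ker hM A hA.le <;> exact M.mem_ker.symm⟩
end

section
/- Let δ ∈ (0,1) and k ≥ 2, and let {(S_i,G_i)}_{i≥1} be a sequence of systems of configurations of degree k. Set p_i* = min{ max over U ⊆ {1,…,k} with |U| ≥ 2 of (|G_i|/|π_U(S_i^{(k)})|)^{1/(|U|−1)}, 1 }. Then there exists c > 0 depending only on δ and k (one may take c = (1−δ)/4) such that the following holds: if p(i) ∈ [0,1] is a sequence with p(i)·|G_i| → ∞ and p(i)·|S_i^{(k)}|^{1/k} → ∞, with p(i) ≤ c·p_i* for all i, and the sequence {(S_i,G_i)} is concentrated for p, then P_{p(i)}({A ⊆ G_i : A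 is (δ,S_i)_k-stable}) → 0 as i → ∞. -/
open Finset Filter Topology

attribute [local instance] Classical.propDecidable

/-- The set `S^{(k)}` of tuples of `S` with pairwise distinct entries. -/
noncomputable def distinctPart {k : ℕ} {G : Type} (S : Finset (Fin k → G)) :
    Finset (Fin k → G) :=
  S.filter fun x => Function.Injective x

/-- `|π_U(S)|`: the number of projections of tuples of `S` to the coordinates in `U`. -/
noncomputable def projCard {k : ℕ} {G : Type} (S : Finset (Fin k → G))
    (U : Finset (Fin k)) : ℕ :=
  (S.image (fun x => fun j : {a : Fin k // a ∈ U} => x j.1)).card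

/-- `|π_U(S) ∩ A^{|U|}|`: the number of projections of tuples of `S` to the coordinates in `U`
all of whose entries lie in `A`. -/
noncomputable def projCardIn {k : ℕ} {G : Type} (S : Finset (Fin k → G))
    (U : Finset (Fin k)) (A : Finset G) : ℕ :=
  ((S.filter (fun x => ∀ j ∈ U, x j ∈ A)).image
    (fun x => fun j : {a : Fin k // a ∈ U} => x j.1)).card

/-- Probability assigned to a family `E` of subsets of `G` by the binomial random subset
`[G]_p`. -/
noncomputable def binomProb {G : Type} [Fintype G] (p : ℝ) (E : Finset (Finset G)) : ℝ :=
  ∑ A ∈ E, p ^ A.card * (1 - p) ^ (Fintype.card G - A.card)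

/-- `X` is `(δ,S)_k`-stable. -/
def StableK {k : ℕ} {G : Type} (δ : ℝ) (S : Finset (Fin k → G)) (X : Finset G) : Prop :=
  ∀ X' ⊆ X, δ * (X.card : ℝ) ≤ (X'.card : ℝ) →
    (∃ x ∈ S, ∀ j, x j ∈ X') ∧ (∃ x ∈ distinctPart S, ∀ j, x j ∈ X')

/-- The sequence `{(S_i,G_i)}` is concentrated for the probability sequence `p`. -/
def Concentrated (k : ℕ) (G : ℕ → Type) [∀ i, Fintype (G i)]
    (S : ∀ i, Finset (Fin k → G i)) (p : ℕ → ℝ) : Prop :=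
  ∀ ε ε' : ℝ, 0 < ε → 0 < ε' → ∃ n₀ : ℕ, ∀ i, n₀ ≤ Fintype.card (G i) →
    ∀ U : Finset (Fin k), 2 ≤ U.card →
      binomProb (p i) (Finset.univ.filter (fun A : Finset (G i) =>
        ε * (p i) ^ U.card * (projCard (distinctPart (S i)) U : ℝ) ≤
          |(projCardIn (distinctPart (S i)) U A : ℝ) -
            (p i) ^ U.card * (projCard (distinctPart (S i)) U : ℝ)|)) ≤ ε'

/-- The quantity `p* = min{max_{|U| ≥ 2} (|G|/|π_U(S^{(k)})|)^{1/(|U|-1)}, 1}`. -/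
noncomputable def pStar {k : ℕ} {G : Type} [Fintype G] (S : Finset (Fin k → G)) : ℝ :=
  min (sSup {x : ℝ | ∃ U : Finset (Fin k), 2 ≤ U.card ∧
    x = ((Fintype.card G : ℝ) / (projCard (distinctPart S) U : ℝ))
          ^ (1 / ((U.card : ℝ) - 1))}) 1

/-!
Put `n = |G|` and let `U` attain the maximum defining `p*`. The bound `p ≤ c p*` gives
`p ^ |U| |π_U(S^{(k)})| ≤ c p n` (for `c ≤ 1`), so by concentration a random set `A` contains at
most about `c p n` of the `U`-projections of `S^{(k)}`. By Chernoff, `|A|` is at least about `p n`.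
Fix `j ∈ U` and delete from `A` the `j`-th entries of all these projections: no tuple of `S^{(k)}`
survives, and a proportion of only about `c < 1 - δ` of `A` was deleted. So `A` is not stable.
-/

lemma pow_mul_one_sub_pow_nonneg {p : ℝ} (hp0 : 0 ≤ p) (hp1 : p ≤ 1) (a b : ℕ) :
    0 ≤ p ^ a * (1 - p) ^ b :=
  mul_nonneg (pow_nonneg hp0 a) (pow_nonneg (sub_nonneg.mpr hp1) b)

lemma exp_neg_le_one_sub_add_sq_div_two {t : ℝ} (ht : 0 ≤ t) :
    Real.exp (-t) ≤ 1 - t + t ^ 2 / 2 := by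
  have quadratic : 1 + t + t ^ 2 / 2 ≤ Real.exp t := Real.quadratic_le_exp_of_nonneg ht
  have factor_nonneg : 0 ≤ 1 - t + t ^ 2 / 2 := by nlinarith [sq_nonneg (t - 1)]
  rw [Real.exp_neg, inv_le_iff_one_le_mul₀ (Real.exp_pos t)]
  calc
    1 ≤ (1 - t + t ^ 2 / 2) * (1 + t + t ^ 2 / 2) := by nlinarith [sq_nonneg (t ^ 2)]
    _ ≤ (1 - t + t ^ 2 / 2) * Real.exp t := mul_le_mul_of_nonneg_left quadratic factor_nonneg

lemma exp_neg_mul_add_one_sub_le {p t : ℝ} (hp0 : 0 ≤ p) (ht : 0 ≤ t) :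
    Real.exp (-t) * p + (1 - p) ≤ Real.exp ((t ^ 2 / 2 - t) * p) :=
  calc
    Real.exp (-t) * p + (1 - p) ≤ (1 - t + t ^ 2 / 2) * p + (1 - p) := by
      gcongr
      exact exp_neg_le_one_sub_add_sq_div_two ht
    _ = (t ^ 2 / 2 - t) * p + 1 := by ring
    _ ≤ Real.exp ((t ^ 2 / 2 - t) * p) := Real.add_one_le_exp _

lemma pow_le_mul_of_le_mul_rpow_one_div {p c q : ℝ} (hp0 : 0 ≤ p) (hc0 : 0 ≤ c) (hc1 : c ≤ 1)
    (hq : 0 ≤ q) {m : ℕ} (hm : m ≠ 0) (h : p ≤ c * q ^ (1 / (m : ℝ))) :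
    p ^ m ≤ c * q :=
  calc
    p ^ m ≤ (c * q ^ (1 / (m : ℝ))) ^ m := pow_le_pow_left₀ hp0 h m
    _ = c ^ m * q := by rw [mul_pow, one_div, Real.rpow_inv_natCast_pow hq hm]
    _ ≤ c * q := mul_le_mul_of_nonneg_right (pow_le_of_le_one hc0 hc1 hm) hq

section BinomialSubset

variable {G : Type} [Fintype G] {p : ℝ}

lemma binomProb_nonneg (hp0 : 0 ≤ p) (hp1 : p ≤ 1) (E : Finset (Finset G)) :
    0 ≤ binomProb p E :=
  sum_nonneg fun _ _ => pow_mul_one_sub_pow_nonneg hp0 hp1 _ _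

lemma binomProb_mono (hp0 : 0 ≤ p) (hp1 : p ≤ 1) {E F : Finset (Finset G)} (h : E ⊆ F) :
    binomProb p E ≤ binomProb p F :=
  sum_le_sum_of_subset_of_nonneg h fun _ _ _ => pow_mul_one_sub_pow_nonneg hp0 hp1 _ _

lemma binomProb_union_le (hp0 : 0 ≤ p) (hp1 : p ≤ 1) (E F : Finset (Finset G)) :
    binomProb p (E ∪ F) ≤ binomProb p E + binomProb p F := by
  have union_add_inter : binomProb p (E ∪ F) + binomProb p (E ∩ F) =
      binomProb p E + binomProb p F := sum_union_inter
  linarith [binomProb_nonneg hp0 hp1 (E ∩ F)]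

lemma binomProb_le_sum_mul (hp0 : 0 ≤ p) (hp1 : p ≤ 1) {E : Finset (Finset G)}
    {f : Finset G → ℝ} (hf : ∀ A, 0 ≤ f A) (hE : ∀ A ∈ E, 1 ≤ f A) :
    binomProb p E ≤ ∑ A, f A * (p ^ A.card * (1 - p) ^ (Fintype.card G - A.card)) :=
  calc
    binomProb p E ≤ ∑ A ∈ E, f A * (p ^ A.card * (1 - p) ^ (Fintype.card G - A.card)) :=
      sum_le_sum fun A hA =>
        le_mul_of_one_le_left (pow_mul_one_sub_pow_nonneg hp0 hp1 _ _) (hE A hA)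
    _ ≤ _ := sum_le_univ_sum_of_nonneg fun A =>
      mul_nonneg (hf A) (pow_mul_one_sub_pow_nonneg hp0 hp1 _ _)

lemma sum_pow_card_mul_binomial (x p : ℝ) :
    ∑ A : Finset G, x ^ A.card * (p ^ A.card * (1 - p) ^ (Fintype.card G - A.card)) =
      (x * p + (1 - p)) ^ Fintype.card G := by
  simp_rw [← mul_assoc, ← mul_pow]
  exact Fintype.sum_pow_mul_eq_add_pow G (x * p) (1 - p)

-- Markov's inequality for `exp (-t |A|)` bounds this by `exp ((t ^ 2 / 2 - t ε) p n)`, and `t = ε`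
-- is the best choice.
lemma binomProb_card_le_one_sub_mul_le_exp (hp0 : 0 ≤ p) (hp1 : p ≤ 1) {ε : ℝ} (hε : 0 ≤ ε) :
    binomProb p {A : Finset G | (A.card : ℝ) ≤ (1 - ε) * (p * Fintype.card G)} ≤
      Real.exp (-(ε ^ 2 / 2 * (p * Fintype.card G))) := by
  set n := Fintype.card G
  set a : ℝ := (1 - ε) * (p * n)
  have weight_eq (A : Finset G) : Real.exp (ε * (a - A.card)) =
      Real.exp (ε * a) * Real.exp (-ε) ^ A.card := by
    rw [← Real.exp_nat_mul, ← Real.exp_add]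
    ring_nf
  calc
    binomProb p {A : Finset G | (A.card : ℝ) ≤ a} ≤
        ∑ A : Finset G, Real.exp (ε * (a - A.card)) *
          (p ^ A.card * (1 - p) ^ (n - A.card)) :=
      binomProb_le_sum_mul hp0 hp1 (fun _ => (Real.exp_pos _).le) fun A hA =>
        Real.one_le_exp (mul_nonneg hε (sub_nonneg.mpr (mem_filter.mp hA).2))
    _ = Real.exp (ε * a) * (Real.exp (-ε) * p + (1 - p)) ^ n := by
      simp_rw [weight_eq, mul_assoc, ← mul_sum]
      rw [sum_pow_card_mul_binomial]
    _ ≤ Real.exp (ε * a) * Real.exp ((ε ^ 2 / 2 - ε) * p) ^ n := by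
      have : 0 ≤ Real.exp (-ε) * p + (1 - p) :=
        add_nonneg (mul_nonneg (Real.exp_pos _).le hp0) (sub_nonneg.mpr hp1)
      gcongr
      exact exp_neg_mul_add_one_sub_le hp0 hε
    _ = Real.exp (-(ε ^ 2 / 2 * (p * n))) := by
      rw [← Real.exp_nat_mul, ← Real.exp_add]
      congr 1
      ring

end BinomialSubset

section Configurations

variable {k : ℕ} {G : Type}

lemma card_image_apply_le_projCardIn (T : Finset (Fin k → G)) {U : Finset (Fin k)} {j : Fin k}
    (hj : j ∈ U) (A : Finset G) :
    ((T.filter fun x => ∀ l ∈ U, x l ∈ A).image fun x => x j).card ≤ projCardIn T U A := by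
  have factors : ((T.filter fun x => ∀ l ∈ U, x l ∈ A).image fun x => x j) =
      ((T.filter fun x => ∀ l ∈ U, x l ∈ A).image
        fun x => fun l : {a : Fin k // a ∈ U} => x l.1).image fun y => y ⟨j, hj⟩ := by
    rw [image_image]
    rfl
  rw [factors]
  exact card_image_le

lemma StableK.lt_projCardIn {δ : ℝ} {S : Finset (Fin k → G)} {A : Finset G}
    (h : StableK δ S A) {U : Finset (Fin k)} (hU : U.Nonempty) :
    (1 - δ) * (A.card : ℝ) < projCardIn (distinctPart S) U A := by
  obtain ⟨j, hj⟩ := hU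
  set B := ((distinctPart S).filter fun x => ∀ l ∈ U, x l ∈ A).image fun x => x j
  have card_B_le : (B.card : ℝ) ≤ projCardIn (distinctPart S) U A := by
    exact_mod_cast card_image_apply_le_projCardIn (distinctPart S) hj A
  have card_le_add : (A.card : ℝ) ≤ (A \ B).card + B.card := by
    exact_mod_cast tsub_le_iff_right.mp (le_card_sdiff B A)
  by_contra! hle
  obtain ⟨-, x, hx, hxA⟩ := h (A \ B) sdiff_subset (by linarith)
  have mem_B : x j ∈ B :=
    mem_image.mpr ⟨x, mem_filter.mpr ⟨hx, fun l _ => (mem_sdiff.mp (hxA l)).1⟩, rfl⟩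
  exact (mem_sdiff.mp (hxA j)).2 mem_B

variable [Fintype G]

lemma exists_pStar_le (hk : 2 ≤ k) (S : Finset (Fin k → G)) :
    ∃ U : Finset (Fin k), 2 ≤ U.card ∧
      pStar S ≤ ((Fintype.card G : ℝ) / projCard (distinctPart S) U) ^
        (1 / ((U.card : ℝ) - 1)) := by
  set ratio : Finset (Fin k) → ℝ := fun U =>
    ((Fintype.card G : ℝ) / projCard (distinctPart S) U) ^ (1 / ((U.card : ℝ) - 1))
  set T : Set ℝ := {x | ∃ U : Finset (Fin k), 2 ≤ U.card ∧ x = ratio U}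
  have finite_T : T.Finite :=
    (Set.finite_range ratio).subset fun x ⟨U, _, hx⟩ => ⟨U, hx.symm⟩
  have nonempty_T : T.Nonempty := ⟨_, univ, by simpa using hk, rfl⟩
  obtain ⟨U, hU, sSup_eq⟩ := nonempty_T.csSup_mem finite_T
  exact ⟨U, hU, (min_le_left (sSup T) 1).trans_eq sSup_eq⟩

lemma exists_pow_card_mul_projCard_le (hk : 2 ≤ k) {S : Finset (Fin k → G)} {p c : ℝ}
    (hp0 : 0 ≤ p) (hc0 : 0 ≤ c) (hc1 : c ≤ 1) (h : p ≤ c * pStar S) :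
    ∃ U : Finset (Fin k), 2 ≤ U.card ∧
      p ^ U.card * (projCard (distinctPart S) U : ℝ) ≤ c * (p * Fintype.card G) := by
  obtain ⟨U, hU, pStar_le⟩ := exists_pStar_le hk S
  refine ⟨U, hU, ?_⟩
  set P : ℝ := (projCard (distinctPart S) U : ℝ)
  have : 0 ≤ P := Nat.cast_nonneg _
  have pow_le : p ^ (U.card - 1) ≤ c * (Fintype.card G / P) := by
    refine pow_le_mul_of_le_mul_rpow_one_div hp0 hc0 hc1 (by positivity) (by omega) ?_
    rw [Nat.cast_sub (by omega), Nat.cast_one]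
    exact h.trans (mul_le_mul_of_nonneg_left pStar_le hc0)
  calc
    p ^ U.card * P = p * P * p ^ (U.card - 1) := by
      rw [← Nat.sub_add_cancel (by omega : 1 ≤ U.card), pow_succ, Nat.add_sub_cancel]
      ring
    _ ≤ p * P * (c * (Fintype.card G / P)) := by gcongr
    _ = P / P * (c * (p * Fintype.card G)) := by ring
    _ ≤ c * (p * Fintype.card G) := mul_le_of_le_one_left (by positivity) (div_self_le_one P)

/-- The event that the number of `U`-projections of tuples of `T` lying in the random set differs
from `p ^ |U| * |π_U(T)|` by a proportion of at least `ε`. These are the events whose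
probabilities `Concentrated` makes small. -/
noncomputable def deviationEvent (ε p : ℝ) (T : Finset (Fin k → G)) (U : Finset (Fin k)) :
    Finset (Finset G) :=
  univ.filter fun A => ε * p ^ U.card * (projCard T U : ℝ) ≤
    |(projCardIn T U A : ℝ) - p ^ U.card * (projCard T U : ℝ)|

lemma filter_stableK_subset {δ ε p c : ℝ} {S : Finset (Fin k → G)} {U : Finset (Fin k)}
    (hU : U.Nonempty) (hp0 : 0 ≤ p) (hε : 0 ≤ ε) (hδ : δ ≤ 1)
    (hc : (1 + ε) * c ≤ (1 - δ) * (1 - ε))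
    (hPU : p ^ U.card * (projCard (distinctPart S) U : ℝ) ≤ c * (p * Fintype.card G)) :
    ({A | StableK δ S A} : Finset (Finset G)) ⊆ deviationEvent ε p (distinctPart S) U ∪
      ({A | (A.card : ℝ) ≤ (1 - ε) * (p * Fintype.card G)} : Finset (Finset G)) := by
  intro A hA
  rw [mem_union, deviationEvent, mem_filter_univ, mem_filter_univ, or_iff_not_imp_right, not_le]
  intro card_gt
  set μ := p ^ U.card * (projCard (distinctPart S) U : ℝ)
  have le_projCardIn : (1 + ε) * μ ≤ projCardIn (distinctPart S) U A :=
    calc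
      (1 + ε) * μ ≤ (1 + ε) * (c * (p * Fintype.card G)) := by gcongr
      _ = (1 + ε) * c * (p * Fintype.card G) := (mul_assoc ..).symm
      _ ≤ (1 - δ) * (1 - ε) * (p * Fintype.card G) := by gcongr
      _ = (1 - δ) * ((1 - ε) * (p * Fintype.card G)) := mul_assoc ..
      _ ≤ (1 - δ) * A.card := mul_le_mul_of_nonneg_left card_gt.le (sub_nonneg.mpr hδ)
      _ ≤ projCardIn (distinctPart S) U A := ((mem_filter.mp hA).2.lt_projCardIn hU).le
  calc
    ε * p ^ U.card * (projCard (distinctPart S) U : ℝ) = (1 + ε) * μ - μ := by ring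
    _ ≤ projCardIn (distinctPart S) U A - μ := sub_le_sub_right le_projCardIn μ
    _ ≤ |projCardIn (distinctPart S) U A - μ| := le_abs_self _

theorem exists_binomProb_stableK_le (hk : 2 ≤ k) {δ ε p c : ℝ} {S : Finset (Fin k → G)}
    (hp0 : 0 ≤ p) (hp1 : p ≤ 1) (hε : 0 ≤ ε) (hδ : δ ≤ 1) (hc0 : 0 ≤ c) (hc1 : c ≤ 1)
    (hc : (1 + ε) * c ≤ (1 - δ) * (1 - ε)) (hp : p ≤ c * pStar S) :
    ∃ U : Finset (Fin k), 2 ≤ U.card ∧ binomProb p {A : Finset G | StableK δ S A} ≤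
      binomProb p (deviationEvent ε p (distinctPart S) U) +
        Real.exp (-(ε ^ 2 / 2 * (p * Fintype.card G))) := by
  obtain ⟨U, hU, hPU⟩ := exists_pow_card_mul_projCard_le hk hp0 hc0 hc1 hp
  have nonempty_U : U.Nonempty := card_pos.mp (by omega)
  refine ⟨U, hU, ?_⟩
  exact (binomProb_mono hp0 hp1 (filter_stableK_subset nonempty_U hp0 hε hδ hc hPU)).trans <|
    (binomProb_union_le hp0 hp1 _ _).trans <|
      add_le_add_right (binomProb_card_le_one_sub_mul_le_exp hp0 hp1 hε) _

end Configurations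

section Sequences

variable {k : ℕ} {G : ℕ → Type} [∀ i, Fintype (G i)] {S : ∀ i, Finset (Fin k → G i)} {p : ℕ → ℝ}

lemma tendsto_card_atTop_of_tendsto_mul (hp1 : ∀ i, p i ≤ 1)
    (hG : Tendsto (fun i => p i * (Fintype.card (G i) : ℝ)) atTop atTop) :
    Tendsto (fun i => Fintype.card (G i)) atTop atTop :=
  tendsto_natCast_atTop_iff.mp <|
    tendsto_atTop_mono (fun i => mul_le_of_le_one_left (Nat.cast_nonneg _) (hp1 i)) hG

lemma Concentrated.eventually_binomProb_deviationEvent_le (h : Concentrated k G S p)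
    (hG : Tendsto (fun i => Fintype.card (G i)) atTop atTop) {ε ε' : ℝ} (hε : 0 < ε)
    (hε' : 0 < ε') :
    ∀ᶠ i in atTop, ∀ U : Finset (Fin k), 2 ≤ U.card →
      binomProb (p i) (deviationEvent ε (p i) (distinctPart (S i)) U) ≤ ε' := by
  obtain ⟨n₀, hn₀⟩ := h ε ε' hε hε'
  exact (hG.eventually_ge_atTop n₀).mono hn₀

theorem stmt8_general (hk : 2 ≤ k) {δ c : ℝ} (hδ : 0 ≤ δ) (hc0 : 0 ≤ c) (hc : c < 1 - δ)
    (hp : ∀ i, 0 ≤ p i ∧ p i ≤ 1)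
    (hG : Tendsto (fun i => p i * (Fintype.card (G i) : ℝ)) atTop atTop)
    (hle : ∀ i, p i ≤ c * pStar (S i)) (hconc : Concentrated k G S p) :
    Tendsto (fun i => binomProb (p i) {A : Finset (G i) | StableK δ (S i) A}) atTop (𝓝 0) := by
  obtain ⟨ε, hε, hcε⟩ : ∃ ε : ℝ, 0 < ε ∧ (1 + ε) * c ≤ (1 - δ) * (1 - ε) :=
    -- `(1 + ε) c ≤ c + ε = 1 - δ - ε ≤ (1 - δ) (1 - ε)`
    ⟨(1 - δ - c) / 2, by linarith, by nlinarith⟩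
  have tail_tendsto : Tendsto (fun i => Real.exp (-(ε ^ 2 / 2 * (p i * Fintype.card (G i)))))
      atTop (𝓝 0) :=
    Real.tendsto_exp_neg_atTop_nhds_zero.comp (hG.const_mul_atTop (by positivity))
  have card_tendsto := tendsto_card_atTop_of_tendsto_mul (fun i => (hp i).2) hG
  refine tendsto_order.mpr ⟨fun a ha => .of_forall fun i =>
    ha.trans_le (binomProb_nonneg (hp i).1 (hp i).2 _), fun η hη => ?_⟩
  filter_upwards [tail_tendsto.eventually_lt_const (half_pos hη),
    hconc.eventually_binomProb_deviationEvent_le card_tendsto hε (half_pos hη)]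
    with i tail_lt deviation_le
  obtain ⟨U, hU, stable_le⟩ := exists_binomProb_stableK_le hk (hp i).1 (hp i).2 hε.le
    (by linarith) hc0 (by linarith) hcε (hle i)
  linarith [deviation_le U hU]

end Sequences

/-- the 0-statement for configurations and large probabilities. -/
theorem stmt8 (k : ℕ) (hk : 2 ≤ k) (δ : ℝ) (hδ0 : 0 < δ) (hδ1 : δ < 1) :
    ∃ c : ℝ, 0 < c ∧
      ∀ (G : ℕ → Type) [∀ i, Fintype (G i)]
        (S : ∀ i, Finset (Fin k → G i)),
      ∀ p : ℕ → ℝ, (∀ i, 0 ≤ p i ∧ p i ≤ 1) →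
        Tendsto (fun i => p i * (Fintype.card (G i) : ℝ)) atTop atTop →
        Tendsto (fun i => p i * ((distinctPart (S i)).card : ℝ) ^ ((1:ℝ)/(k:ℝ)))
          atTop atTop →
        (∀ i, p i ≤ c * pStar (S i)) →
        Concentrated k G S p →
        Tendsto (fun i => binomProb (p i)
            (Finset.univ.filter (fun A : Finset (G i) => StableK δ (S i) A)))
          atTop (nhds 0) := by
  refine ⟨(1 - δ) / 4, by linarith, fun _ _ _ _ hp hG _ hle hconc => ?_⟩
  exact stmt8_general hk hδ0.le (by linarith) (by linarith) hp hG hle hconc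
end

section
/- Let k ≥ 2 and let {(S_i,G_i)}_{i≥1} be a normal sequence of systems of configurations of degree k arising from invariant group homomorphisms on finite abelian groups. Let p(i) ∈ [0,1] be a sequence with p(i)·|G_i| → ∞ and p(i)·|π_U(S_i)|^{1/|U|} → ∞ for every U ⊆ {1,…,k} with |U| ≥ 2. Then the sequence is concentrated for p: for all ε, ε' > 0 there exists n₀ such that for every i with |G_i| ≥ n₀ and every U ⊆ {1,…,k} with |U| ≥ 2, P_{p(i)}({A ⊆ G_i : | |π_U(S_i^{(k)}) ∩ A^{|U|}| − p(i)^{|U|}·|π_U(S_i^{(k)})| | ≥ ε·p(i)^{|U|}·|π_U(S_i^{(k)})|}) ≤ ε'. -/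
open Finset Filter Topology

attribute [local instance] Classical.propDecidable

/-- A sequence of configuration systems of degree `k` is normal with function `γ`. -/
def NormalSeq (k : ℕ) (G : ℕ → Type) [∀ i, Fintype (G i)]
    (S : ∀ i, Finset (Fin k → G i)) (γ : ℝ → ℝ) : Prop :=
  Tendsto (fun i => (Fintype.card (G i) : ℝ)) atTop atTop ∧
  Tendsto (fun i => (Fintype.card (G i) : ℝ) / ((S i).card : ℝ)) atTop (nhds 0) ∧
  Tendsto (fun i => (Fintype.card (G i) : ℝ) ^ k / ((S i).card : ℝ)) atTop atTop ∧
  Tendsto (fun i => ((distinctPart (S i)).card : ℝ) / ((S i).card : ℝ)) atTop (nhds 1) ∧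
  (∀ ε : ℝ, 0 < ε → ε < 1 → 0 < γ ε ∧ γ ε < 1) ∧
  (∀ ε : ℝ, 0 < ε → ε < 1 → ∀ i, ∀ X : Finset (G i),
    ε * (Fintype.card (G i) : ℝ) ≤ (X.card : ℝ) →
    γ ε * ((S i).card : ℝ) ≤ (((S i).filter (fun x => ∀ j, x j ∈ X)).card : ℝ))

/-!
The proof is the second moment method. Put `H = π_U(S)` and `T = π_U(S^{(k)})`. Both `S` and its
projections are closed under `a - b + c`, so all nonempty fibres of a projection of `H` have the
same size. Hence at most `|B| ^ |W| * |H| / |π_W(H)|` tuples of `H` have all their coordinates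
indexed by `W` in a given set `B`. Taking for `B` the entries of a tuple of `T` and summing over
`W ≠ ∅` bounds the variance of the number of tuples of `T` inside `[G]_p` by a constant times
`(p ^ |U| * |T|) ^ 2 / L`, where `L` is the least of the `p ^ |W| * |π_W(S)|`. These tend to
infinity: for `|W| ≥ 2` by hypothesis, and for `|W| = 1` because `S` contains the constant tuples,
so that `|π_W(S)| = |G|`. Chebyshev's inequality concludes.
-/

/-- A finite subset of a group closed under `a - b + c`, i.e. a coset of a subgroup or the empty
set. Solution sets of linear systems, homogeneous or not, and their projections are of this form. -/
def SubAddClosed {α : Type*} [AddGroup α] (H : Finset α) : Prop :=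
  ∀ a ∈ H, ∀ b ∈ H, ∀ c ∈ H, a - b + c ∈ H

namespace SubAddClosed

lemma of_mem_iff_map_eq_zero {α β : Type*} [AddGroup α] [AddGroup β] {H : Finset α} (f : α →+ β)
    (hH : ∀ x, x ∈ H ↔ f x = 0) : SubAddClosed H := by
  intro a ha b hb c hc
  rw [hH] at *
  simp [ha, hb, hc]

section Image

variable {α β : Type*} [AddGroup α] [AddGroup β] [DecidableEq β] {H T : Finset α} {f : α → β}

lemma image (hH : SubAddClosed H) (hf : ∀ a b c, f (a - b + c) = f a - f b + f c) :
    SubAddClosed (H.image f) := by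
  simp only [SubAddClosed, forall_mem_image]
  intro a ha b hb c hc
  rw [← hf]
  exact mem_image_of_mem f (hH a ha b hb c hc)

lemma card_fiber_le_card_fiber (hH : SubAddClosed H)
    (hf : ∀ a b c, f (a - b + c) = f a - f b + f c) (v : β) {w : β} (hw : w ∈ H.image f) :
    #{x ∈ H | f x = v} ≤ #{x ∈ H | f x = w} := by
  obtain hv | ⟨y, hy⟩ := {x ∈ H | f x = v}.eq_empty_or_nonempty
  · simp [hv]
  obtain ⟨z, hz, rfl⟩ := mem_image.1 hw
  rw [mem_filter] at hy
  refine card_le_card_of_injOn (fun x ↦ x - y + z) (fun x hx ↦ ?_) fun _ _ _ _ h ↦ by simpa using h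
  rw [coe_filter, Set.mem_ofPred] at hx
  simp [hH x hx.1 y hy.1 z hz, hf, hx.2, hy.2]

lemma card_fiber_mul_card_image_le (hH : SubAddClosed H)
    (hf : ∀ a b c, f (a - b + c) = f a - f b + f c) (v : β) :
    #{x ∈ H | f x = v} * #(H.image f) ≤ #H :=
  mul_card_image_le_card H _ fun _ hw ↦ hH.card_fiber_le_card_fiber hf v hw

lemma card_mul_card_image_le (hH : SubAddClosed H)
    (hf : ∀ a b c, f (a - b + c) = f a - f b + f c) (hT : T ⊆ H) :
    #T * #(H.image f) ≤ #(T.image f) * #H := by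
  rw [card_eq_sum_card_image f T, sum_mul, ← smul_eq_mul (a := #(T.image f))]
  refine sum_le_card_nsmul _ _ _ fun v _ ↦ ?_
  exact (Nat.mul_le_mul_right _ (card_le_card (filter_subset_filter _ hT))).trans
    (hH.card_fiber_mul_card_image_le hf v)

lemma mul_card_image_le_card_image (hH : SubAddClosed H)
    (hf : ∀ a b c, f (a - b + c) = f a - f b + f c) (hT : T ⊆ H) {c : ℝ} (hHT : c * #H ≤ #T) :
    c * #(H.image f) ≤ #(T.image f) := by
  obtain rfl | hne := H.eq_empty_or_nonempty
  · simp
  have hpos : (0 : ℝ) < #H := mod_cast hne.card_pos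
  refine le_of_mul_le_mul_right ?_ hpos
  calc
    c * #(H.image f) * #H = c * #H * #(H.image f) := mul_right_comm ..
    _ ≤ #T * #(H.image f) := by gcongr
    _ ≤ #(T.image f) * #H := mod_cast hH.card_mul_card_image_le hf hT

end Image

section Pi

variable {ι G : Type*} [AddGroup G] {H : Finset (ι → G)}

lemma image_restrict (hH : SubAddClosed H) (W : Finset ι) : SubAddClosed (H.image W.restrict) :=
  hH.image fun _ _ _ ↦ rfl

lemma card_filter_mem_mul_card_image_restrict_le (hH : SubAddClosed H) (W : Finset ι)
    (B : Finset G) :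
    #{s ∈ H | ∀ j ∈ W, s j ∈ B} * #(H.image W.restrict) ≤ #B ^ #W * #H := by
  have himage : {s ∈ H | ∀ j ∈ W, s j ∈ B}.image W.restrict ⊆ Fintype.piFinset fun _ ↦ B := by
    simp +contextual [image_subset_iff]
  calc
    _ ≤ #({s ∈ H | ∀ j ∈ W, s j ∈ B}.image W.restrict) * #H :=
      hH.card_mul_card_image_le (fun _ _ _ ↦ rfl) (filter_subset _ _)
    _ ≤ #(Fintype.piFinset fun _ : W ↦ B) * #H := Nat.mul_le_mul_right _ (card_le_card himage)
    _ = #B ^ #W * #H := by simp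

lemma sum_card_image_restrict_le [Fintype ι] (hH : SubAddClosed H) (B : Finset G) :
    ∑ s ∈ H, #(H.image (restrict {j | s j ∈ B})) ≤ (#B + 1) ^ Fintype.card ι * #H := by
  calc
    _ = ∑ W : Finset ι, ∑ s ∈ H with ({j | s j ∈ B} : Finset ι) = W, #(H.image W.restrict) :=
      (sum_fiberwise' H (fun s ↦ ({j | s j ∈ B} : Finset ι)) fun W ↦ #(H.image W.restrict)).symm
    _ ≤ ∑ W : Finset ι, #B ^ #W * #H := sum_le_sum fun W _ ↦ by
      rw [sum_const, smul_eq_mul]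
      refine le_trans ?_ (hH.card_filter_mem_mul_card_image_restrict_le W B)
      gcongr with s
      rintro rfl
      simp
    _ = (#B + 1) ^ Fintype.card ι * #H := by
      simp [← sum_mul, ← Fintype.sum_pow_mul_eq_add_pow]

end Pi

end SubAddClosed

section Covariance

variable {ι G : Type*} [Fintype ι]

lemma card_union_image_add_card_filter {s : ι → G} (hs : Function.Injective s) (B : Finset G) :
    #(B ∪ univ.image s) + #{j | s j ∈ B} = #B + Fintype.card ι := by
  have hinter : B ∩ univ.image s = ({j | s j ∈ B} : Finset ι).image s := by
    rw [inter_comm, ← filter_mem_eq_inter, filter_image]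
  rw [← card_image_of_injective _ hs, ← hinter, card_union_add_card_inter,
    card_image_of_injective _ hs, card_univ]

variable {H T : Finset (ι → G)} {p c L : ℝ}

lemma pow_card_union_image_sub_le (hp : 0 < p) (hL : 0 < L)
    (hW : ∀ W : Finset ι, W.Nonempty → L ≤ p ^ #W * #(H.image W.restrict))
    {s : ι → G} (hs : Function.Injective s) (B : Finset G) :
    p ^ #(B ∪ univ.image s) - p ^ (#B + Fintype.card ι) ≤
      p ^ (#B + Fintype.card ι) / L * #(H.image (restrict {j | s j ∈ B})) := by
  rw [← card_union_image_add_card_filter hs B]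
  obtain hempty | hne := ({j | s j ∈ B} : Finset ι).eq_empty_or_nonempty
  · simp only [hempty, card_empty, add_zero, sub_self]
    positivity
  calc
    _ ≤ p ^ #(B ∪ univ.image s) := sub_le_self _ (by positivity)
    _ = p ^ #(B ∪ univ.image s) * L / L := by field_simp
    _ ≤ p ^ #(B ∪ univ.image s) *
        (p ^ #{j | s j ∈ B} * #(H.image (restrict {j | s j ∈ B}))) / L := by
      gcongr
      exact hW _ hne
    _ = _ := by ring

variable [AddGroup G]

lemma sum_pow_card_union_image_sub_le (hH : SubAddClosed H) (hTH : T ⊆ H)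
    (hT : ∀ t ∈ T, Function.Injective t) (hp : 0 < p) (hL : 0 < L)
    (hW : ∀ W : Finset ι, W.Nonempty → L ≤ p ^ #W * #(H.image W.restrict)) (B : Finset G) :
    ∑ s ∈ T, (p ^ #(B ∪ univ.image s) - p ^ (#B + Fintype.card ι)) ≤
      p ^ (#B + Fintype.card ι) / L * ((#B + 1) ^ Fintype.card ι * #H) := by
  calc
    _ ≤ ∑ s ∈ T, p ^ (#B + Fintype.card ι) / L * #(H.image (restrict {j | s j ∈ B})) :=
      sum_le_sum fun s hs ↦ pow_card_union_image_sub_le hp hL hW (hT s hs) B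
    _ ≤ ∑ s ∈ H, p ^ (#B + Fintype.card ι) / L * #(H.image (restrict {j | s j ∈ B})) :=
      sum_le_sum_of_subset_of_nonneg hTH fun _ _ _ ↦ by positivity
    _ ≤ _ := by
      rw [← mul_sum]
      gcongr
      exact_mod_cast hH.sum_card_image_restrict_le B

lemma sum_sum_pow_card_union_image_sub_le (hH : SubAddClosed H) (hTH : T ⊆ H)
    (hT : ∀ t ∈ T, Function.Injective t) (hc : 0 < c) (hHT : c * #H ≤ #T) (hp : 0 < p)
    (hL : 0 < L) (hW : ∀ W : Finset ι, W.Nonempty → L ≤ p ^ #W * #(H.image W.restrict)) :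
    ∑ t ∈ T, ∑ s ∈ T, (p ^ #(univ.image t ∪ univ.image s) -
        p ^ (#(univ.image t) + #(univ.image s))) ≤
      (Fintype.card ι + 1) ^ Fintype.card ι / (c * L) * (p ^ Fintype.card ι * #T) ^ 2 := by
  set u := Fintype.card ι
  have hcard (t) (ht : t ∈ T) : #(univ.image t) = u := card_image_of_injective _ (hT t ht)
  have hrow (t) (ht : t ∈ T) :
      ∑ s ∈ T, (p ^ #(univ.image t ∪ univ.image s) - p ^ (#(univ.image t) + #(univ.image s))) ≤
        p ^ (u + u) / L * ((u + 1) ^ u * (#T / c)) := by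
    rw [sum_congr rfl fun s hs ↦ by rw [hcard s hs]]
    refine (sum_pow_card_union_image_sub_le hH hTH hT hp hL hW _).trans ?_
    rw [hcard t ht]
    gcongr
    rwa [le_div_iff₀' hc]
  calc
    _ ≤ ∑ t ∈ T, p ^ (u + u) / L * ((u + 1) ^ u * (#T / c)) := sum_le_sum hrow
    _ = _ := by
      rw [sum_const, nsmul_eq_mul]
      field_simp
      ring

end Covariance

section Binomial

variable {G : Type} [Fintype G]

/-- Expectation of a random variable on the binomial random subset `[G]_p`. It is bundled as a
linear form and makes sense for every real `p`, although it is positive only for `p ∈ [0, 1]`. -/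
noncomputable def binomExp (p : ℝ) : (Finset G → ℝ) →ₗ[ℝ] ℝ :=
  Fintype.linearCombination ℝ fun A : Finset G ↦ p ^ #A * (1 - p) ^ (Fintype.card G - #A)

lemma binomExp_indicator_Ici (p : ℝ) (B : Finset G) :
    binomExp p ((Set.Ici B).indicator 1) = p ^ #B := by
  have hprod : ∏ i, (p + if i ∈ B then 0 else 1 - p) = p ^ #B := by
    rw [prod_congr rfl fun i _ ↦ show _ = if i ∈ B then p else 1 by split_ifs <;> ring]
    simp
  rw [← hprod, prod_add, powerset_univ, binomExp, Fintype.linearCombination_apply]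
  refine sum_congr rfl fun A _ ↦ ?_
  rw [prod_const, ← card_compl, ← compl_eq_univ_sdiff]
  by_cases hBA : B ⊆ A
  · have hcompl : ∀ i ∈ Aᶜ, (if i ∈ B then 0 else 1 - p) = 1 - p := fun i hi ↦
      if_neg fun hiB ↦ mem_compl.1 hi (hBA hiB)
    simp [hBA, prod_congr rfl hcompl]
  · obtain ⟨b, hbB, hbA⟩ := not_subset.1 hBA
    have hzero : ∏ i ∈ Aᶜ, (if i ∈ B then 0 else 1 - p) = 0 :=
      prod_eq_zero (mem_compl.2 hbA) (if_pos hbB)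
    simp [hBA, hzero]

lemma binomExp_one (p : ℝ) : binomExp p (1 : Finset G → ℝ) = 1 := by
  have h := binomExp_indicator_Ici p (∅ : Finset G)
  rwa [← bot_eq_empty, Set.Ici_bot, Set.indicator_univ, bot_eq_empty, card_empty, pow_zero] at h

lemma binomExp_covariance_indicator_Ici (p : ℝ) (B C : Finset G) :
    binomExp p (((Set.Ici B).indicator 1 - p ^ #B • 1) * ((Set.Ici C).indicator 1 - p ^ #C • 1)) =
      p ^ #(B ∪ C) - p ^ (#B + #C) := by
  have hmul : ((Set.Ici B).indicator 1 * (Set.Ici C).indicator 1 : Finset G → ℝ) =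
      (Set.Ici (B ∪ C)).indicator 1 := by
    rw [← Set.inter_indicator_one, Set.Ici_inter_Ici, sup_eq_union]
  simp only [sub_mul, mul_sub, hmul, smul_mul_assoc, mul_smul_comm, one_mul, mul_one, map_sub,
    map_smul, binomExp_indicator_Ici, binomExp_one, smul_eq_mul]
  ring

lemma binomExp_sq_sum_indicator_Ici_sub {τ : Type*} (p : ℝ) (T : Finset τ) (B : τ → Finset G) :
    binomExp p ((∑ t ∈ T, ((Set.Ici (B t)).indicator 1 - p ^ #(B t) • 1)) ^ 2) =
      ∑ t ∈ T, ∑ s ∈ T, (p ^ #(B t ∪ B s) - p ^ (#(B t) + #(B s))) := by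
  simp only [sq, sum_mul_sum, map_sum, binomExp_covariance_indicator_Ici]

lemma sq_mul_binomProb_le_binomExp_sq {p δ : ℝ} (hp₀ : 0 ≤ p) (hp₁ : p ≤ 1) (hδ : 0 ≤ δ)
    (X : Finset G → ℝ) : δ ^ 2 * binomProb p {A | δ ≤ |X A|} ≤ binomExp p (X ^ 2) := by
  have hweight (A : Finset G) : 0 ≤ p ^ #A * (1 - p) ^ (Fintype.card G - #A) :=
    mul_nonneg (pow_nonneg hp₀ _) (pow_nonneg (sub_nonneg.2 hp₁) _)
  rw [binomProb, mul_sum, binomExp, Fintype.linearCombination_apply]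
  refine (sum_le_sum fun A hA ↦ ?_).trans <|
    sum_le_sum_of_subset_of_nonneg (subset_univ _) fun A _ _ ↦
      mul_nonneg (sq_nonneg _) (hweight A)
  refine mul_le_mul_of_nonneg_right ?_ (hweight A)
  rw [Pi.pow_apply, ← sq_abs (X A)]
  exact pow_le_pow_left₀ hδ (mem_filter.1 hA).2 2

end Binomial

section Concentration

lemma binomProb_abs_card_filter_sub_ge_le {ι G : Type} [Fintype ι] [Fintype G] [AddGroup G]
    {H T : Finset (ι → G)} {p c L ε : ℝ} (hH : SubAddClosed H) (hTH : T ⊆ H)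
    (hT : ∀ t ∈ T, Function.Injective t) (hT₀ : T.Nonempty) (hc : 0 < c) (hHT : c * #H ≤ #T)
    (hp₀ : 0 < p) (hp₁ : p ≤ 1) (hL : 0 < L)
    (hW : ∀ W : Finset ι, W.Nonempty → L ≤ p ^ #W * #(H.image W.restrict)) (hε : 0 < ε) :
    binomProb p {A | ε * p ^ Fintype.card ι * #T ≤
        |(#{t ∈ T | ∀ j, t j ∈ A} : ℝ) - p ^ Fintype.card ι * #T|} ≤
      (Fintype.card ι + 1) ^ Fintype.card ι / (c * L) / ε ^ 2 := by
  set u := Fintype.card ι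
  have hcount (A : Finset G) : (#{t ∈ T | ∀ j, t j ∈ A} : ℝ) - p ^ u * #T =
      (∑ t ∈ T, ((Set.Ici (univ.image t)).indicator 1 - p ^ #(univ.image t) • 1) :
        Finset G → ℝ) A := by
    have hcard (t) (ht : t ∈ T) : #(univ.image t) = u := card_image_of_injective _ (hT t ht)
    rw [sum_congr rfl fun t ht ↦ by rw [hcard t ht]]
    simp [Set.indicator_apply, image_subset_iff, mul_comm]
  have hμ : 0 < p ^ u * #T := by have := hT₀.card_pos; positivity
  simp only [hcount, mul_assoc ε]
  rw [le_div_iff₀ (by positivity), ← mul_le_mul_iff_left₀ (pow_pos hμ 2)]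
  calc
    _ = (ε * (p ^ u * #T)) ^ 2 * binomProb p _ := by ring
    _ ≤ _ := sq_mul_binomProb_le_binomExp_sq hp₀.le hp₁ (by positivity) _
    _ = _ := binomExp_sq_sum_indicator_Ici_sub p T fun t ↦ univ.image t
    _ ≤ _ := sum_sum_pow_card_union_image_sub_le hH hTH hT hc hHT hp₀ hL hW

variable {k : ℕ}

section System

variable {G : Type} {S : Finset (Fin k → G)} {U : Finset (Fin k)}

lemma distinctPart_subset (S : Finset (Fin k → G)) : distinctPart S ⊆ S :=
  filter_subset _ _

lemma projCard_eq_card_image_restrict (S : Finset (Fin k → G)) (U : Finset (Fin k)) :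
    projCard S U = #(S.image U.restrict) :=
  rfl

lemma injective_of_mem_image_restrict_distinctPart {t : U → G}
    (ht : t ∈ (distinctPart S).image U.restrict) : Function.Injective t := by
  obtain ⟨x, hx, rfl⟩ := mem_image.1 ht
  exact (mem_filter.1 hx).2.comp Subtype.val_injective

lemma projCardIn_eq_card_filter (S : Finset (Fin k → G)) (U : Finset (Fin k)) (A : Finset G) :
    projCardIn S U A = #{t ∈ S.image U.restrict | ∀ j, t j ∈ A} := by
  rw [projCardIn, filter_image]
  congr 2
  ext x
  simp

lemma card_image_restrict_image_restrict (S : Finset (Fin k → G)) (U : Finset (Fin k))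
    (W : Finset U) :
    #((S.image U.restrict).image W.restrict) =
      projCard S (W.map (Function.Embedding.subtype (· ∈ U))) := by
  set V := W.map (Function.Embedding.subtype (· ∈ U))
  let e (y : V → G) (j : W) : G := y ⟨j.1, mem_map_of_mem _ j.2⟩
  have he : Function.Injective e := by
    intro y z h
    funext ⟨a, ha⟩
    obtain ⟨b, hb, rfl⟩ := mem_map.1 ha
    exact congrFun h ⟨b, hb⟩
  rw [projCard_eq_card_image_restrict, ← card_image_of_injective _ he, image_image, image_image]
  rfl

lemma projCard_singleton_of_const_mem [Fintype G] (hS : ∀ g : G, (fun _ ↦ g) ∈ S) (a : Fin k) :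
    projCard S {a} = Fintype.card G := by
  have hinj : Function.Injective fun (g : G) (_ : ({a} : Finset (Fin k))) ↦ g :=
    fun _ _ h ↦ congrFun h ⟨a, mem_singleton_self a⟩
  rw [← card_univ, ← card_image_of_injective _ hinj, projCard_eq_card_image_restrict]
  congr 1
  ext y
  simp only [mem_image, mem_univ, true_and]
  refine ⟨fun ⟨x, _, hx⟩ ↦ ⟨x a, ?_⟩, fun ⟨g, hg⟩ ↦ ⟨_, hS g, hg⟩⟩
  ext ⟨j, hj⟩
  simp [← hx, mem_singleton.1 hj]

lemma binomProb_projCardIn_le [Fintype G] [AddGroup G] {p c L ε : ℝ} (hS : SubAddClosed S)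
    (hc : 0 < c) (hdist : c * #S ≤ #(distinctPart S)) (hp₀ : 0 ≤ p) (hp₁ : p ≤ 1) (hL : 0 < L)
    (hproj : ∀ W : Finset (Fin k), W.Nonempty → L ≤ p ^ #W * projCard S W) (hε : 0 < ε)
    (hU : U.Nonempty) :
    binomProb p {A | ε * p ^ #U * projCard (distinctPart S) U ≤
        |(projCardIn (distinctPart S) U A : ℝ) - p ^ #U * projCard (distinctPart S) U|} ≤
      (#U + 1) ^ #U / (c * L) / ε ^ 2 := by
  have hpos : 0 < p ^ #U * projCard S U := hL.trans_le (hproj U hU)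
  have hp : 0 < p := hp₀.lt_of_ne' fun h ↦ by simp [h, hU.ne_empty] at hpos
  set H := S.image U.restrict
  set T := (distinctPart S).image U.restrict
  have hHT : c * #H ≤ #T :=
    hS.mul_card_image_le_card_image (fun _ _ _ ↦ rfl) (distinctPart_subset S) hdist
  have hT₀ : T.Nonempty := by
    have hH₀ : (0 : ℝ) < #H := pos_of_mul_pos_right hpos (by positivity)
    exact card_pos.1 (mod_cast (mul_pos hc hH₀).trans_le hHT)
  have hW (W : Finset U) (hW : W.Nonempty) : L ≤ p ^ #W * #(H.image W.restrict) := by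
    rw [card_image_restrict_image_restrict, ← card_map (Function.Embedding.subtype (· ∈ U))]
    exact hproj _ hW.map
  simpa only [Fintype.card_coe, projCardIn_eq_card_filter, projCard_eq_card_image_restrict] using
    binomProb_abs_card_filter_sub_ge_le (hS.image_restrict U)
      (image_subset_image (distinctPart_subset S))
      (fun _ ↦ injective_of_mem_image_restrict_distinctPart) hT₀ hc hHT hp hp₁ hL hW hε

end System

section Sequence

lemma exists_forall_le_of_eventually_atTop (f : ℕ → ℕ) {P : ℕ → Prop}
    (hP : ∀ᶠ i in atTop, P i) : ∃ n, ∀ i, n ≤ f i → P i := by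
  obtain ⟨i₀, hi₀⟩ := eventually_atTop.1 hP
  refine ⟨(range i₀).sup f + 1, fun i hi ↦ hi₀ i ?_⟩
  by_contra! hlt
  exact (Nat.lt_of_succ_le hi).not_ge (le_sup (mem_range.2 hlt))

variable {G : ℕ → Type} {S : ∀ i, Finset (Fin k → G i)}

lemma eventually_mul_card_le_card_distinctPart
    (hS : Tendsto (fun i ↦ (#(distinctPart (S i)) : ℝ) / #(S i)) atTop (𝓝 1)) {c : ℝ}
    (hc : c < 1) : ∀ᶠ i in atTop, c * #(S i) ≤ #(distinctPart (S i)) :=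
  (hS.eventually_const_le hc).mono fun _ hi ↦ mul_le_of_le_div₀ (by positivity) (by positivity) hi


lemma tendsto_pow_card_mul_projCard [∀ i, Fintype (G i)] {p : ℕ → ℝ}
    (hS : ∀ i (g : G i), (fun _ ↦ g) ∈ S i)
    (hp₁ : Tendsto (fun i ↦ p i * (Fintype.card (G i) : ℝ)) atTop atTop)
    (hp₂ : ∀ U : Finset (Fin k), 2 ≤ #U →
      Tendsto (fun i ↦ p i * (projCard (S i) U : ℝ) ^ ((1 : ℝ) / #U)) atTop atTop)
    {U : Finset (Fin k)} (hU : U.Nonempty) :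
    Tendsto (fun i ↦ p i ^ #U * projCard (S i) U) atTop atTop := by
  obtain hU₂ | hU₁ := le_or_gt 2 #U
  · refine ((tendsto_pow_atTop hU.card_ne_zero).comp (hp₂ U hU₂)).congr fun i ↦ ?_
    rw [Function.comp_apply, mul_pow, one_div,
      Real.rpow_inv_natCast_pow (Nat.cast_nonneg _) hU.card_ne_zero]
  · obtain ⟨a, rfl⟩ := card_eq_one.1 (by have := hU.card_pos; lia : #U = 1)
    simpa only [card_singleton, pow_one, projCard_singleton_of_const_mem (hS _)] using hp₁

end Sequence

end Concentration

theorem stmt10_general {k : ℕ} {G : ℕ → Type} [∀ i, Fintype (G i)] [∀ i, AddGroup (G i)]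
    {S : ∀ i, Finset (Fin k → G i)} (hS : ∀ i, SubAddClosed (S i))
    {c : ℝ} (hc : 0 < c) (hdist : ∀ᶠ i in atTop, c * #(S i) ≤ #(distinctPart (S i)))
    {p : ℕ → ℝ} (hp : ∀ i, 0 ≤ p i ∧ p i ≤ 1)
    (hproj : ∀ U : Finset (Fin k), U.Nonempty →
      Tendsto (fun i ↦ p i ^ #U * projCard (S i) U) atTop atTop)
    {ε ε' : ℝ} (hε : 0 < ε) (hε' : 0 < ε') :
    ∃ n₀ : ℕ, ∀ i, n₀ ≤ Fintype.card (G i) → ∀ U : Finset (Fin k), U.Nonempty →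
      binomProb (p i) {A | ε * p i ^ #U * projCard (distinctPart (S i)) U ≤
        |(projCardIn (distinctPart (S i)) U A : ℝ) -
          p i ^ #U * projCard (distinctPart (S i)) U|} ≤ ε' := by
  refine exists_forall_le_of_eventually_atTop _ ?_
  simp only [eventually_all]
  intro U hU
  set L : ℝ := (#U + 1) ^ #U / (c * ε ^ 2 * ε') with hL
  have hlarge : ∀ᶠ i in atTop, ∀ W : Finset (Fin k), W.Nonempty →
      L ≤ p i ^ #W * projCard (S i) W := by
    simp only [eventually_all]
    exact fun W hW ↦ (hproj W hW).eventually_ge_atTop L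
  filter_upwards [hdist, hlarge] with i hdist_i hlarge_i
  refine (binomProb_projCardIn_le (hS i) hc hdist_i (hp i).1 (hp i).2 (by positivity) hlarge_i hε
    hU).trans_eq ?_
  rw [hL]
  field_simp

/-- concentration for normal sequences arising from invariant homomorphisms. -/
theorem stmt10 (k : ℕ) (hk : 2 ≤ k)
    (G : ℕ → Type) [∀ i, Fintype (G i)] [∀ i, AddCommGroup (G i)]
    (S : ∀ i, Finset (Fin k → G i))
    (M : ∀ i, (Fin k → G i) →+ (Fin k → G i))
    (hinv : ∀ i (x : G i), M i (fun _ => x) = 0)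
    (hker : ∀ i (x : Fin k → G i), x ∈ S i ↔ M i x = 0)
    (γ : ℝ → ℝ) (hnormal : NormalSeq k G S γ)
    (p : ℕ → ℝ) (hp : ∀ i, 0 ≤ p i ∧ p i ≤ 1)
    (hp1 : Tendsto (fun i => p i * (Fintype.card (G i) : ℝ)) atTop atTop)
    (hp2 : ∀ U : Finset (Fin k), 2 ≤ U.card →
      Tendsto (fun i => p i * (projCard (S i) U : ℝ) ^ ((1:ℝ)/(U.card:ℝ))) atTop atTop) :
    ∀ ε ε' : ℝ, 0 < ε → 0 < ε' → ∃ n₀ : ℕ, ∀ i, n₀ ≤ Fintype.card (G i) →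
      ∀ U : Finset (Fin k), 2 ≤ U.card →
        binomProb (p i) (Finset.univ.filter (fun A : Finset (G i) =>
          ε * (p i) ^ U.card * (projCard (distinctPart (S i)) U : ℝ) ≤
            |(projCardIn (distinctPart (S i)) U A : ℝ) -
              (p i) ^ U.card * (projCard (distinctPart (S i)) U : ℝ)|)) ≤ ε' := by
  intro ε ε' hε hε'
  obtain ⟨-, -, -, hratio, -, -⟩ := hnormal
  obtain ⟨n₀, hn₀⟩ := stmt10_general (fun i ↦ .of_mem_iff_map_eq_zero (M i) (hker i)) one_half_pos
    (eventually_mul_card_le_card_distinctPart hratio one_half_lt_one) hp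
    (fun _ ↦ tendsto_pow_card_mul_projCard (fun i g ↦ (hker i _).2 (hinv i g)) hp1 hp2) hε hε'
  exact ⟨n₀, fun i hi U hU ↦ hn₀ i hi U (card_pos.1 (by lia))⟩
end

section
/- Let k ≥ 2 and let {(S_i,G_i)}_{i≥1} be a sequence of systems of configurations of degree k arising from invariant group homomorphisms on finite abelian groups, and assume |S_i^{(k)}|/|S_i| → 1 as i → ∞. Then there exist ρ > 0 and i₀ such that for every i ≥ i₀ the system (S_i,G_i) is ρ-k-uniform: for every U ⊆ {1,…,k} with |U| ≥ 2 and every x ∈ π_U(S_i^{(k)}), |π_U^{-1}(x) ∩ S_i^{(k)}| ≥ ρ·max over y ∈ π_U(S_i^{(k)}) of |π_U^{-1}(y) ∩ S_i^{(k)}|. -/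
/-!
Subtracting a solution identifies a fibre of `π_U` on `S` with the group `A` of solutions vanishing
on `U`. In the fibre through `x`, the tuples with distinct entries correspond to the `a ∈ A` with
`a p - a q ≠ x q - x p` for all `p < q`, that is, to the complement of `k.choose 2` cosets in `A`,
none of which contains `0`. Such a complement has density at least `2 ^ (-k.choose 2)`, so any two
fibres have comparable sizes.

The density bound for `n` cosets is an instance of the uncertainty principle. Cover each coset by a
level set `{χ = c}` of a character, with `c ≠ 1`. The product `f` of the functions `χ - c` vanishes
on every coset but not at `0`, and all its translates lie in the span of the `2 ^ n` products of
distinct `χ`s. At most `2 ^ n` of these translates span all of them, so their supports, which are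
translates of the support of `f`, cover `A`.
-/

open Finset Filter Topology

attribute [local instance] Classical.propDecidable

/-- `(S,G)` is `ρ-k`-uniform: for every `U` with `|U| ≥ 2`, all nonempty fibers of `π_U` on
`S^{(k)}` have size at least `ρ` times the maximal fiber size. -/
def RhoUniform {k : ℕ} {G : Type} (ρ : ℝ) (S : Finset (Fin k → G)) : Prop :=
  ∀ U : Finset (Fin k), 2 ≤ U.card →
    ∀ x ∈ distinctPart S, ∀ y ∈ distinctPart S,
      ρ * (((distinctPart S).filter (fun z => ∀ j ∈ U, z j = y j)).card : ℝ)
        ≤ (((distinctPart S).filter (fun z => ∀ j ∈ U, z j = x j)).card : ℝ)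

theorem prod_addChar_sub_translate_mem_span {A K ι : Type*} [AddMonoid A] [Field K]
    (χ : ι → AddChar A K) (c : ι → K) (T : Finset ι) (s : A) :
    (fun t => ∏ j ∈ T, (χ j (s + t) - c j)) ∈
      Submodule.span K (T.powerset.image fun I t => ∏ j ∈ I, χ j t : Set (A → K)) := by
  have hexpand : (fun t => ∏ j ∈ T, (χ j (s + t) - c j)) =
      ∑ I ∈ T.powerset, ((∏ j ∈ I, χ j s) * ∏ j ∈ T \ I, -c j) • fun t => ∏ j ∈ I, χ j t := by
    ext t
    simp only [sub_eq_add_neg, prod_add, AddChar.map_add_eq_mul, prod_mul_distrib,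
      Finset.sum_apply, Pi.smul_apply, smul_eq_mul]
    exact sum_congr rfl fun I _ => by ring
  rw [hexpand]
  exact sum_mem fun I hI => Submodule.smul_mem _ _ (Submodule.subset_span (mem_image_of_mem _ hI))

section Density

variable {A K ι : Type*} [Finite A] [Field K]

theorem natCard_le_finrank_mul_ncard_support [AddGroup A] {V : Submodule K (A → K)} {f : A → K}
    (hf : f ≠ 0) (hV : ∀ s, (fun t => f (s + t)) ∈ V) :
    Nat.card A ≤ Module.finrank K V * f.support.ncard := by
  let translates : Set (A → K) := Set.range fun s t => f (s + t)
  obtain ⟨b, hb, hspan, -⟩ := Submodule.exists_fun_fin_finrank_span_eq K translates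
  choose s hs using hb
  have hcover : ⋃ i, (s i + ·) ⁻¹' f.support = Set.univ := by
    refine Set.eq_univ_of_forall fun t => ?_
    by_contra ht
    have hvanish : ∀ i, f (s i + t) = 0 := by simpa using ht
    have hle : Submodule.span K translates ≤ (LinearMap.proj t : (A → K) →ₗ[K] K).ker := by
      rw [← hspan, Submodule.span_le]
      rintro _ ⟨i, rfl⟩
      simpa [← hs i] using hvanish i
    refine hf (funext fun r => ?_)
    simpa using hle (Submodule.subset_span ⟨r - t, rfl⟩)
  have hsupport : ∀ i, ((s i + ·) ⁻¹' f.support).ncard = f.support.ncard := fun i =>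
    Set.ncard_preimage_of_injective_subset_range (add_right_injective (s i))
      (by simp [(add_left_surjective (s i)).range_eq])
  calc
    Nat.card A = (⋃ i, (s i + ·) ⁻¹' f.support).ncard := by rw [hcover, Set.ncard_univ]
    _ ≤ ∑ i, ((s i + ·) ⁻¹' f.support).ncard := Set.ncard_iUnion_le_of_fintype _
    _ = Module.finrank K (Submodule.span K translates) * f.support.ncard := by simp [hsupport]
    _ ≤ Module.finrank K V * f.support.ncard := by
      gcongr
      exact Submodule.finrank_mono (Submodule.span_le.2 (Set.range_subset_iff.2 hV))

theorem natCard_le_two_pow_mul_ncard_addChar_ne [AddGroup A] (χ : ι → AddChar A K) {c : ι → K}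
    {T : Finset ι} (hc : ∀ j ∈ T, c j ≠ 1) :
    Nat.card A ≤ 2 ^ #T * {t | ∀ j ∈ T, χ j t ≠ c j}.ncard := by
  let f : A → K := fun t => ∏ j ∈ T, (χ j t - c j)
  let products : Finset (A → K) := T.powerset.image fun I t => ∏ j ∈ I, χ j t
  have hsupport : f.support = {t | ∀ j ∈ T, χ j t ≠ c j} := by
    ext t
    simp [f, prod_ne_zero_iff, sub_ne_zero]
  have hzero : (0 : A) ∈ f.support := by
    rw [hsupport]
    exact fun j hj => by simpa using (hc j hj).symm
  rw [← hsupport]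
  calc
    Nat.card A ≤ Module.finrank K (Submodule.span K (products : Set (A → K))) * f.support.ncard :=
      natCard_le_finrank_mul_ncard_support (fun hf => hzero (congrFun hf 0)) fun s => by
        simpa [f, products] using prod_addChar_sub_translate_mem_span χ c T s
    _ ≤ 2 ^ #T * f.support.ncard := by
      gcongr
      calc
        _ ≤ #products := finrank_span_finset_le_card products
        _ ≤ 2 ^ #T := card_image_le.trans_eq (card_powerset T)

theorem exists_addChar_eq_on_fiber [AddGroup A] {B : Type*} [AddCommGroup B] (φ : A →+ B) {b : B}
    (hb : b ≠ 0) : ∃ (χ : AddChar A ℂ) (c : ℂ), c ≠ 1 ∧ ∀ a, φ a = b → χ a = c := by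
  by_cases hrange : b ∈ φ.range
  · have : Finite φ.range := .of_surjective _ φ.rangeRestrict_surjective
    obtain ⟨ψ, hψ⟩ := AddChar.exists_apply_ne_zero.2
      (show (⟨b, hrange⟩ : φ.range) ≠ 0 from Subtype.coe_ne_coe.1 hb)
    exact ⟨ψ.compAddMonoidHom φ.rangeRestrict, ψ ⟨b, hrange⟩, hψ,
      fun a ha => congrArg ψ (Subtype.ext ha)⟩
  · exact ⟨1, 0, zero_ne_one, fun a ha => absurd ⟨a, ha⟩ hrange⟩

theorem natCard_le_two_pow_mul_ncard_addMonoidHom_ne [AddGroup A] {B : Type*} [AddCommGroup B]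
    (φ : ι → A →+ B) {b : ι → B} {T : Finset ι} (hb : ∀ j ∈ T, b j ≠ 0) :
    Nat.card A ≤ 2 ^ #T * {a | ∀ j ∈ T, φ j a ≠ b j}.ncard := by
  choose! χ c hc hχ using fun j (hj : j ∈ T) => exists_addChar_eq_on_fiber (φ j) (hb j hj)
  calc
    Nat.card A ≤ 2 ^ #T * {a | ∀ j ∈ T, χ j a ≠ c j}.ncard :=
      natCard_le_two_pow_mul_ncard_addChar_ne χ hc
    _ ≤ 2 ^ #T * {a | ∀ j ∈ T, φ j a ≠ b j}.ncard := by
      refine Nat.mul_le_mul_left _ (Set.ncard_le_ncard fun a ha j hj => ?_)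
      exact mt (hχ j hj a) (ha j hj)

theorem natCard_le_two_pow_mul_ncard_injective_add [AddGroup A] [Fintype ι] [LinearOrder ι]
    {G : Type*} [AddCommGroup G] (θ : A →+ ι → G) {x : ι → G} (hx : Function.Injective x) :
    Nat.card A ≤ 2 ^ (Fintype.card ι).choose 2 * {a | Function.Injective (x + θ a)}.ncard := by
  let pairs : Finset (ι × ι) := {p | p.1 < p.2}
  let φ : ι × ι → A →+ G := fun p =>
    (Pi.evalAddMonoidHom (fun _ => G) p.1 - Pi.evalAddMonoidHom (fun _ => G) p.2).comp θ
  have hcard : #pairs = (Fintype.card ι).choose 2 := by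
    convert Fintype.card_product_filter_lt (α := ι)
  have hne_zero : ∀ p ∈ pairs, x p.2 - x p.1 ≠ 0 := fun p hp =>
    sub_ne_zero.2 (hx.ne (mem_filter.1 hp).2.ne')
  have hinjective : {a | ∀ p ∈ pairs, φ p a ≠ x p.2 - x p.1} ⊆
      {a | Function.Injective (x + θ a)} := by
    refine fun a ha => .of_lt_imp_ne fun p q hpq heq => ha (p, q) (by simpa [pairs] using hpq) ?_
    simpa [φ, sub_eq_sub_iff_add_eq_add, add_comm] using heq
  calc
    Nat.card A ≤ 2 ^ #pairs * {a | ∀ p ∈ pairs, φ p a ≠ x p.2 - x p.1}.ncard :=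
      natCard_le_two_pow_mul_ncard_addMonoidHom_ne φ hne_zero
    _ ≤ 2 ^ (Fintype.card ι).choose 2 * {a | Function.Injective (x + θ a)}.ncard := by
      rw [hcard]
      exact Nat.mul_le_mul_left _ (Set.ncard_le_ncard hinjective)

end Density

section Fibers

/-- The subgroup of those tuples in `H` that vanish on `U`. If `H` is the solution set of a linear
system, then the nonempty fibres of `π_U` on `H` are the cosets of this subgroup. -/
def vanishingOn {ι G : Type*} [AddGroup G] (H : AddSubgroup (ι → G)) (U : Set ι) :
    AddSubgroup (ι → G) :=
  H ⊓ AddSubgroup.pi U fun _ => ⊥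

theorem mem_vanishingOn {ι G : Type*} [AddGroup G] {H : AddSubgroup (ι → G)} {U : Set ι}
    {a : ι → G} : a ∈ vanishingOn H U ↔ a ∈ H ∧ ∀ j ∈ U, a j = 0 :=
  Iff.rfl

variable {k : ℕ} {G : Type} [AddCommGroup G] {S : Finset (Fin k → G)}
  {H : AddSubgroup (Fin k → G)} {x y : Fin k → G}

theorem card_distinctPart_fiber (hS : ∀ z, z ∈ S ↔ z ∈ H) (hx : x ∈ H) (U : Finset (Fin k)) :
    #{z ∈ distinctPart S | ∀ j ∈ U, z j = x j} =
      {a : vanishingOn H (U : Set (Fin k)) | Function.Injective (x + (a : Fin k → G))}.ncard := by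
  rw [← Set.ncard_coe_finset]
  symm
  refine Set.ncard_congr (fun a _ => x + a) ?_
    (fun a b _ _ hab => Subtype.ext (add_left_cancel hab)) ?_
  · rintro ⟨a, ha⟩ hinj
    obtain ⟨haH, haU⟩ := mem_vanishingOn.1 ha
    have hfiber : ∀ j ∈ U, (x + a) j = x j := fun j hj => by simpa using haU j hj
    simpa [distinctPart, hS, H.add_mem hx haH] using And.intro hinj hfiber
  · intro z hz
    simp only [distinctPart, coe_filter, mem_filter, hS, Set.mem_ofPred_eq] at hz
    obtain ⟨⟨hzH, hzinj⟩, hzU⟩ := hz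
    have hmem : z - x ∈ vanishingOn H (U : Set (Fin k)) :=
      mem_vanishingOn.2 ⟨H.sub_mem hzH hx, fun j hj => sub_eq_zero.2 (hzU j hj)⟩
    exact ⟨⟨z - x, hmem⟩, by simpa using hzinj, add_sub_cancel x z⟩

theorem card_distinctPart_fiber_le (hS : ∀ z, z ∈ S ↔ z ∈ H) (hx : x ∈ distinctPart S)
    (hy : y ∈ distinctPart S) (U : Finset (Fin k)) :
    #{z ∈ distinctPart S | ∀ j ∈ U, z j = y j} ≤
      2 ^ k.choose 2 * #{z ∈ distinctPart S | ∀ j ∈ U, z j = x j} := by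
  simp only [distinctPart, mem_filter, hS] at hx hy
  let A := vanishingOn H (U : Set (Fin k))
  have : Finite A := S.finite_toSet.subset fun a ha => (hS a).2 (mem_vanishingOn.1 ha).1
  calc
    _ = {a : A | Function.Injective (y + (a : Fin k → G))}.ncard :=
      card_distinctPart_fiber hS hy.1 U
    _ ≤ Nat.card A := Set.ncard_le_card _
    _ ≤ 2 ^ k.choose 2 * {a : A | Function.Injective (x + (a : Fin k → G))}.ncard := by
      simpa using natCard_le_two_pow_mul_ncard_injective_add A.subtype hx.2
    _ = _ := by rw [card_distinctPart_fiber hS hx.1 U]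

end Fibers

theorem stmt11_general {k : ℕ} {G : Type} [AddCommGroup G] {S : Finset (Fin k → G)}
    {H : AddSubgroup (Fin k → G)} (hS : ∀ z, z ∈ S ↔ z ∈ H) :
    RhoUniform ((1 / 2) ^ k.choose 2) S := by
  intro U _ x hx y hy
  rw [one_div, inv_pow, inv_mul_le_iff₀ (by positivity)]
  exact_mod_cast card_distinctPart_fiber_le hS hx hy U

/-- uniformity of sequences of invariant homomorphism systems with
`|S_i^{(k)}|/|S_i| → 1`. -/
theorem stmt11 (k : ℕ) (hk : 2 ≤ k)
    (G : ℕ → Type) [∀ i, Fintype (G i)] [∀ i, AddCommGroup (G i)]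
    (S : ∀ i, Finset (Fin k → G i))
    (M : ∀ i, (Fin k → G i) →+ (Fin k → G i))
    (hinv : ∀ i (x : G i), M i (fun _ => x) = 0)
    (hker : ∀ i (x : Fin k → G i), x ∈ S i ↔ M i x = 0)
    (hratio : Tendsto
      (fun i => ((distinctPart (S i)).card : ℝ) / ((S i).card : ℝ)) atTop (nhds 1)) :
    ∃ ρ : ℝ, 0 < ρ ∧ ∃ i₀ : ℕ, ∀ i, i₀ ≤ i → RhoUniform ρ (S i) := by
  exact ⟨(1 / 2) ^ k.choose 2, by positivity, 0, fun i _ =>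
    stmt11_general (H := (M i).ker) (hker i)⟩
end

section
/- Let m, k ≥ 1 be integers and let M : (ℤ^m)^k → (ℤ^m)^k be a group homomorphism with M(x,…,x) = 0 for all x ∈ ℤ^m. For n ≥ 1 let S_n = M^{-1}(0) ∩ ([1,n]^m)^k, and for a positive integer N let S̄_N ⊆ ((ℤ/Nℤ)^m)^k denote the kernel of the homomorphism induced by M on ((ℤ/Nℤ)^m)^k by reduction modulo N. Then there exist a positive integer λ and a constant c > 0, both depending only on M, such that for every n ≥ 1 and every i ∈ {1,…,k}: α_i(S_n, [1,n]^m) ≤ α_i(S̄_{λn}, (ℤ/λnℤ)^m) ≤ c·α_i(S_n, [1,n]^m). -/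
open Finset

attribute [local instance] Classical.propDecidable

/-- The `i`-th degree of freedom `α_i(S)`: the maximum, over sets `U` of `i` coordinates and
over tuples of prescribed values attained on these coordinates, of the number of tuples of `S`
agreeing with the prescribed values on `U`.  (For `i ≥ 1` the maximum over all prescribed
values is attained on values coming from tuples of `S`.) -/
noncomputable def alphaOf {k : ℕ} {G : Type} (S : Finset (Fin k → G)) (i : ℕ) : ℕ :=
  (Finset.univ.filter fun U : Finset (Fin k) => U.card = i).sup fun U =>
    S.sup fun x => (S.filter fun y => ∀ j ∈ U, y j = x j).card

/-!
For `n ≤ N` reduction modulo `N` embeds `S_n` into `S̄_N` coordinatewise, which gives the lower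
bound. For the upper bound, lift a solution modulo `N` to the integer tuple `x` with entries in
`[0, N)`. Then `M x` is divisible by `N` and of size `O(N)`, so there are boundedly many values of
`M x / N`; and if `N ≤ l n`, the box `[0, N)` is covered by boundedly many cells of side
`h = ⌈n / 2⌉`. Two lifts `x`, `x'` with the same value of `M` in the same cell differ by a solution
with entries in `(-h, h)`, and since `M` kills constant tuples, `x - x' + h` is a solution in
`[1, n]`. So each of the boundedly many classes of solutions modulo `N` embeds coordinatewise
into `S_n`.
-/

section DegreesOfFreedom

variable {k : ℕ} {G H : Type} {β : Type*} [DecidableEq β] {S : Finset (Fin k → G)} {i : ℕ}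

theorem alphaOf_le {a : ℕ}
    (h : ∀ U : Finset (Fin k), #U = i → ∀ x ∈ S, #{y ∈ S | ∀ j ∈ U, y j = x j} ≤ a) :
    alphaOf S i ≤ a :=
  Finset.sup_le fun U hU => Finset.sup_le (h U (mem_filter.1 hU).2)

theorem card_filter_eqOn_le_alphaOf (S : Finset (Fin k → G)) (U : Finset (Fin k))
    (x : Fin k → G) : #{y ∈ S | ∀ j ∈ U, y j = x j} ≤ alphaOf S #U := by
  obtain hempty | ⟨z, hz⟩ := {y ∈ S | ∀ j ∈ U, y j = x j}.eq_empty_or_nonempty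
  · simp only [hempty, card_empty, zero_le]
  obtain ⟨hzS, hzU⟩ := mem_filter.1 hz
  calc #{y ∈ S | ∀ j ∈ U, y j = x j}
      ≤ #{y ∈ S | ∀ j ∈ U, y j = z j} :=
        card_le_card <| monotone_filter_right S fun y _ hy j hj => (hy j hj).trans (hzU j hj).symm
    _ ≤ alphaOf S #U := le_sup_of_le (b := U) (by simp) (le_sup_of_le hzS le_rfl)

theorem alphaOf_le_alphaOf_of_injOn_map {T : Finset (Fin k → H)} (g : Fin k → G → H)
    (hg : Set.MapsTo (Pi.map g) S T) (hinj : Set.InjOn (Pi.map g) S) (i : ℕ) :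
    alphaOf S i ≤ alphaOf T i := by
  refine alphaOf_le ?_
  rintro U rfl x -
  refine le_trans ?_ (card_filter_eqOn_le_alphaOf T U (Pi.map g x))
  refine card_le_card_of_injOn (Pi.map g) (fun y hy => ?_) (hinj.mono (filter_subset _ S))
  obtain ⟨hyS, hyU⟩ := mem_filter.1 hy
  exact mem_filter.2 ⟨hg hyS, fun j hj => congrArg (g j) (hyU j hj)⟩

theorem alphaOf_le_sum_alphaOf_fiber (S : Finset (Fin k → G)) (f : (Fin k → G) → β) (i : ℕ) :
    alphaOf S i ≤ ∑ b ∈ S.image f, alphaOf {y ∈ S | f y = b} i := by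
  refine alphaOf_le ?_
  rintro U rfl x -
  rw [card_eq_sum_card_fiberwise fun y hy => mem_image_of_mem f (mem_filter.1 hy).1]
  gcongr with b
  rw [filter_comm]
  exact card_filter_eqOn_le_alphaOf _ U x

theorem alphaOf_le_card_mul {f : (Fin k → G) → β} {B : Finset β} {a : ℕ}
    (hf : ∀ y ∈ S, f y ∈ B) (ha : ∀ z ∈ S, alphaOf {y ∈ S | f y = f z} i ≤ a) :
    alphaOf S i ≤ #B * a :=
  calc alphaOf S i
      ≤ ∑ b ∈ S.image f, alphaOf {y ∈ S | f y = b} i := alphaOf_le_sum_alphaOf_fiber S f i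
    _ ≤ #(S.image f) * a := sum_le_card_nsmul _ _ _ (forall_mem_image.2 ha)
    _ ≤ #B * a := Nat.mul_le_mul_right a (card_le_card (image_subset_iff.2 hf))

end DegreesOfFreedom

theorem abs_sub_lt_of_ediv_eq {a b h : ℤ} (hpos : 0 < h) (hab : a / h = b / h) :
    |a - b| < h := by
  have hsub : a - b = a % h - b % h := by
    rw [Int.emod_def, Int.emod_def, hab, sub_sub_sub_cancel_right]
  rw [hsub]
  exact abs_sub_lt_of_nonneg_of_lt (Int.emod_nonneg a hpos.ne') (Int.emod_lt_of_pos a hpos)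
    (Int.emod_nonneg b hpos.ne') (Int.emod_lt_of_pos b hpos)

section IntegerHomomorphisms

theorem abs_map_le_sum_basis_mul {A σ : Type*} [AddCommGroup A] [Fintype σ]
    (b : Module.Basis σ ℤ A) (φ : A →+ ℤ) {x : A} {n : ℤ} (hx : ∀ s, |b.repr x s| ≤ n) :
    |φ x| ≤ (∑ s, |φ (b s)|) * n :=
  calc |φ x| = |∑ s, b.repr x s * φ (b s)| := by
        conv_lhs => rw [← b.sum_repr x]
        simp only [map_sum, map_zsmul, smul_eq_mul]
    _ ≤ ∑ s, |b.repr x s| * |φ (b s)| := by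
        simpa only [abs_mul] using abs_sum_le_sum_abs (fun s => b.repr x s * φ (b s)) univ
    _ ≤ ∑ s, n * |φ (b s)| :=
        sum_le_sum fun s _ => mul_le_mul_of_nonneg_right (hx s) (abs_nonneg _)
    _ = (∑ s, |φ (b s)|) * n := by rw [← mul_sum, mul_comm]

variable {ι κ ι' κ' : Type*} (M : (ι → κ → ℤ) →+ (ι' → κ' → ℤ))

theorem exists_abs_map_le_mul [Finite ι] [Finite κ] [Finite ι'] [Finite κ'] :
    ∃ C : ℤ, ∀ (n : ℤ) (x : ι → κ → ℤ), 0 ≤ n → (∀ j r, |x j r| ≤ n) →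
      ∀ j r, |M x j r| ≤ C * n := by
  have := Fintype.ofFinite ι
  have := Fintype.ofFinite κ
  let b := Pi.basis fun _ : ι => Pi.basisFun ℤ κ
  let φ (p : ι' × κ') : (ι → κ → ℤ) →+ ℤ :=
    (Pi.evalAddMonoidHom _ p.2).comp ((Pi.evalAddMonoidHom _ p.1).comp M)
  obtain ⟨C, hC⟩ := Finite.exists_le fun p => ∑ s, |φ p (b s)|
  refine ⟨C, fun n x hn hx j r => ?_⟩
  have hrepr : ∀ s, |b.repr x s| ≤ n := fun s => by
    simpa only [b, Pi.basis_repr, Pi.basisFun_repr] using hx s.1 s.2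
  exact (abs_map_le_sum_basis_mul b (φ (j, r)) hrepr).trans
    (mul_le_mul_of_nonneg_right (hC (j, r)) hn)

theorem intCast_map_eq_of_intCast_eq {N : ℕ} {x x' : ι → κ → ℤ}
    (h : ∀ j r, (x j r : ZMod N) = x' j r) (j : ι') (r : κ') :
    (M x j r : ZMod N) = M x' j r := by
  have hdvd : ∀ j r, ∃ t, x' j r - x j r = N * t := fun j r =>
    (ZMod.intCast_eq_intCast_iff_dvd_sub _ _ N).1 (h j r)
  choose t ht using hdvd
  have hx' : x' = x + (N : ℤ) • t := by
    ext j r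
    simp only [Pi.add_apply, Pi.smul_apply, smul_eq_mul, ← ht, add_sub_cancel]
  rw [hx', map_add, map_zsmul]
  simp

end IntegerHomomorphisms

section Solutions

variable {ι κ ι' κ' : Type*} {M : (ι → κ → ℤ) →+ (ι' → κ' → ℤ)} {n N : ℕ}

/-- The tuple `x` lies in `S_n`, the solutions of `M x = 0` with entries in the cube `[1,n]^κ`. -/
def IsBoxSolution (M : (ι → κ → ℤ) →+ (ι' → κ' → ℤ)) (n : ℕ) (x : ι → κ → ℤ) : Prop :=
  M x = 0 ∧ ∀ j r, x j r ∈ Finset.Icc (1 : ℤ) n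

/-- The tuple `y` lies in `S̄_N`, the kernel of the reduction of `M` modulo `N`. The reduced
homomorphism is not constructed: its value at `y` is computed on an integer tuple lifting `y`. -/
def IsModSolution (M : (ι → κ → ℤ) →+ (ι' → κ' → ℤ)) (N : ℕ) (y : ι → κ → ZMod N) : Prop :=
  ∃ x : ι → κ → ℤ, (∀ j r, (x j r : ZMod N) = y j r) ∧ ∀ j r, (M x j r : ZMod N) = 0

/-- The lift of a tuple of residues modulo `N` to the integer tuple with entries in `[0,N)`;
for `N = 0` it takes absolute values. -/
def leastLift (y : ι → κ → ZMod N) : ι → κ → ℤ := fun j r => (y j r).val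

/-- The label by which the solutions modulo `N` are partitioned in the comparison with `S_n`:
the quotient by `N` of the value of `M` at the lift, and the cell of side `h` containing the lift.
The first component is an exact quotient only on solutions modulo `N`. -/
def liftClass (M : (ι → κ → ℤ) →+ (ι' → κ' → ℤ)) (h : ℤ) (y : ι → κ → ZMod N) :
    (ι' → κ' → ℤ) × (ι → κ → ℤ) :=
  (fun j r => M (leastLift y) j r / N, fun j r => leastLift y j r / h)

theorem intCast_leastLift [NeZero N] (y : ι → κ → ZMod N) (j : ι) (r : κ) :
    (leastLift y j r : ZMod N) = y j r := by
  simp [leastLift]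

theorem leastLift_nonneg (y : ι → κ → ZMod N) (j : ι) (r : κ) : 0 ≤ leastLift y j r :=
  Int.natCast_nonneg _

theorem leastLift_lt [NeZero N] (y : ι → κ → ZMod N) (j : ι) (r : κ) : leastLift y j r < N :=
  Int.ofNat_lt.2 (ZMod.val_lt _)

theorem IsBoxSolution.isModSolution {x : ι → κ → ℤ} (hx : IsBoxSolution M n x) :
    IsModSolution M N fun j r => (x j r : ZMod N) :=
  ⟨x, fun _ _ => rfl, fun _ _ => by simp [hx.1]⟩

theorem IsBoxSolution.eq_of_intCast_eq (hnN : n ≤ N) {x x' : ι → κ → ℤ}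
    (hx : IsBoxSolution M n x) (hx' : IsBoxSolution M n x')
    (h : ∀ j r, (x j r : ZMod N) = x' j r) : x = x' := by
  ext j r
  obtain ⟨hx1, hxn⟩ := Finset.mem_Icc.1 (hx.2 j r)
  obtain ⟨hx'1, hx'n⟩ := Finset.mem_Icc.1 (hx'.2 j r)
  have hlt : |x' j r - x j r| < N := abs_lt.2 ⟨by lia, by lia⟩
  have hdvd := (ZMod.intCast_eq_intCast_iff_dvd_sub _ _ N).1 (h j r)
  exact (sub_eq_zero.1 (Int.eq_zero_of_abs_lt_dvd hdvd hlt)).symm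

theorem isBoxSolution_sub_add_const (hinv : ∀ v : κ → ℤ, M (fun _ => v) = 0) {h : ℤ}
    (hpos : 0 < h) (hn : 2 * h ≤ n + 1) {x x' : ι → κ → ℤ} (hM : M x = M x')
    (hcell : ∀ j r, x j r / h = x' j r / h) :
    IsBoxSolution M n fun j r => x j r - x' j r + h := by
  have hzero : M (x - x' + fun _ _ => h) = 0 := by
    rw [map_add, map_sub, hM, hinv, sub_self, add_zero]
  refine ⟨hzero, fun j r => ?_⟩
  obtain ⟨hlower, hupper⟩ := abs_lt.1 (abs_sub_lt_of_ediv_eq hpos (hcell j r))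
  exact Finset.mem_Icc.2 ⟨by lia, by lia⟩

theorem IsModSolution.dvd_map_leastLift [NeZero N] {y : ι → κ → ZMod N}
    (hy : IsModSolution M N y) (j : ι') (r : κ') : (N : ℤ) ∣ M (leastLift y) j r := by
  obtain ⟨x, hxy, hMx⟩ := hy
  refine (ZMod.intCast_zmod_eq_zero_iff_dvd _ N).1 ?_
  rw [intCast_map_eq_of_intCast_eq M (fun j r => (intCast_leastLift y j r).trans (hxy j r).symm),
    hMx]

theorem IsModSolution.map_leastLift_eq [NeZero N] {h : ℤ} {y z : ι → κ → ZMod N}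
    (hy : IsModSolution M N y) (hz : IsModSolution M N z)
    (hyz : liftClass M h y = liftClass M h z) : M (leastLift y) = M (leastLift z) := by
  ext j r
  have hquot : M (leastLift y) j r / N = M (leastLift z) j r / N :=
    congrFun (congrFun (congrArg Prod.fst hyz) j) r
  exact (Int.ediv_left_inj (hy.dvd_map_leastLift j r) (hz.dvd_map_leastLift j r)).1 hquot

theorem exists_finset_forall_liftClass_mem [Finite ι] [Finite κ] [Finite ι'] [Finite κ']
    (M : (ι → κ → ℤ) →+ (ι' → κ' → ℤ)) (l : ℤ) :
    ∃ B : Finset ((ι' → κ' → ℤ) × (ι → κ → ℤ)), ∀ (N : ℕ) (h : ℤ), N ≠ 0 → 0 < h → N ≤ l * h →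
      ∀ y : ι → κ → ZMod N, liftClass M h y ∈ B := by
  have := Fintype.ofFinite ι
  have := Fintype.ofFinite κ
  have := Fintype.ofFinite ι'
  have := Fintype.ofFinite κ'
  obtain ⟨C, hC⟩ := exists_abs_map_le_mul M
  refine ⟨Finset.Icc (fun _ _ => -C, fun _ _ => 0) (fun _ _ => C, fun _ _ => l),
    fun N h hN hpos hNh y => ?_⟩
  have : NeZero N := ⟨hN⟩
  have hNpos : (0 : ℤ) < N := by exact_mod_cast NeZero.pos N
  have habs : ∀ j r, |leastLift y j r| ≤ N := fun j r =>
    (abs_of_nonneg (leastLift_nonneg y j r)).trans_le (leastLift_lt y j r).le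
  have hMabs : ∀ j r, -(C * N) ≤ M (leastLift y) j r ∧ M (leastLift y) j r ≤ C * N := fun j r =>
    abs_le.1 (hC N _ hNpos.le habs j r)
  refine Finset.mem_Icc.2 ⟨⟨fun j r => ?_, fun j r => ?_⟩, ⟨fun j r => ?_, fun j r => ?_⟩⟩
  · exact (Int.le_ediv_iff_mul_le hNpos).2 ((neg_mul C N).trans_le (hMabs j r).1)
  · exact Int.ediv_nonneg (leastLift_nonneg y j r) hpos.le
  · exact Int.ediv_le_of_le_mul hNpos (hMabs j r).2
  · exact Int.ediv_le_of_le_mul hpos ((leastLift_lt y j r).le.trans hNh)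

end Solutions

section Comparison

variable {k : ℕ} {κ : Type} {ι' κ' : Type*} {M : (Fin k → κ → ℤ) →+ (ι' → κ' → ℤ)} {n N : ℕ}
  {Sn : Finset (Fin k → κ → ℤ)} {Sbar : Finset (Fin k → κ → ZMod N)}

theorem alphaOf_boxSolutions_le_alphaOf_modSolutions (hnN : n ≤ N)
    (hSn : ∀ x ∈ Sn, IsBoxSolution M n x) (hSbar : ∀ y, IsModSolution M N y → y ∈ Sbar) (i : ℕ) :
    alphaOf Sn i ≤ alphaOf Sbar i :=
  alphaOf_le_alphaOf_of_injOn_map (fun _ (v : κ → ℤ) r => (v r : ZMod N))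
    (fun x hx => hSbar _ (hSn x hx).isModSolution)
    (fun x hx x' hx' h => (hSn x hx).eq_of_intCast_eq hnN (hSn x' hx') fun j r =>
      congrFun (congrFun h j) r) i

theorem alphaOf_le_alphaOf_boxSolutions_of_liftClass_eq [NeZero N]
    (hinv : ∀ v : κ → ℤ, M (fun _ => v) = 0) {h : ℤ} (hpos : 0 < h) (hn : 2 * h ≤ n + 1)
    (hSn : ∀ x, IsBoxSolution M n x → x ∈ Sn) {T : Finset (Fin k → κ → ZMod N)}
    {z : Fin k → κ → ZMod N} (hz : IsModSolution M N z)
    (hT : ∀ y ∈ T, IsModSolution M N y ∧ liftClass M h y = liftClass M h z) (i : ℕ) :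
    alphaOf T i ≤ alphaOf Sn i := by
  refine alphaOf_le_alphaOf_of_injOn_map
    (fun j (v : κ → ZMod N) r => ((v r).val : ℤ) - leastLift z j r + h)
    (fun y hy => ?_) (fun y _ y' _ hyy' => ?_) i
  · obtain ⟨hysol, hyz⟩ := hT y hy
    exact hSn _ (isBoxSolution_sub_add_const hinv hpos hn (hysol.map_leastLift_eq hz hyz)
      fun j r => congrFun (congrFun (congrArg Prod.snd hyz) j) r)
  · ext j r
    have hval : leastLift y j r = leastLift y' j r :=
      sub_left_injective (add_left_injective h (congrFun (congrFun hyy' j) r))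
    rw [← intCast_leastLift y, hval, intCast_leastLift]

theorem exists_alphaOf_modSolutions_le [Finite κ] [Finite ι'] [Finite κ']
    (hinv : ∀ v : κ → ℤ, M (fun _ => v) = 0) (l : ℕ) :
    ∃ c : ℕ, ∀ n N : ℕ, N ≠ 0 → N ≤ l * n →
      ∀ Sn : Finset (Fin k → κ → ℤ), (∀ x, IsBoxSolution M n x → x ∈ Sn) →
      ∀ Sbar : Finset (Fin k → κ → ZMod N), (∀ y ∈ Sbar, IsModSolution M N y) →
      ∀ i, alphaOf Sbar i ≤ c * alphaOf Sn i := by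
  obtain ⟨B, hB⟩ := exists_finset_forall_liftClass_mem M (2 * l)
  refine ⟨#B, ?_⟩
  intro n N hN hNl Sn hSn Sbar hSbar i
  have : NeZero N := ⟨hN⟩
  have hnpos : 0 < n := Nat.pos_of_ne_zero fun hn => hN (by simpa [hn] using hNl)
  obtain ⟨h, hpos, hn, hn'⟩ : ∃ h : ℤ, 0 < h ∧ 2 * h ≤ n + 1 ∧ n ≤ 2 * h :=
    ⟨(n + 1) / 2, by lia, by lia, by lia⟩
  have hNh : (N : ℤ) ≤ 2 * l * h :=
    calc (N : ℤ) ≤ l * n := by exact_mod_cast hNl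
      _ ≤ l * (2 * h) := by gcongr
      _ = 2 * l * h := by ring
  refine alphaOf_le_card_mul (fun y _ => hB N h hN hpos hNh y) fun z hz => ?_
  refine alphaOf_le_alphaOf_boxSolutions_of_liftClass_eq hinv hpos hn hSn (hSbar z hz)
    (fun y hy => ?_) i
  obtain ⟨hySbar, hyz⟩ := mem_filter.1 hy
  exact ⟨hSbar y hySbar, hyz⟩

end Comparison

theorem stmt13_general {k : ℕ} {κ : Type} {ι' κ' : Type*} [Finite κ] [Finite ι'] [Finite κ']
    (M : (Fin k → κ → ℤ) →+ (ι' → κ' → ℤ)) (hinv : ∀ v : κ → ℤ, M (fun _ => v) = 0) (l : ℕ) :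
    ∃ c : ℝ, 0 < c ∧
      ∀ n N : ℕ, N ≠ 0 → n ≤ N → N ≤ l * n →
      ∀ Sn : Finset (Fin k → κ → ℤ), (∀ x, x ∈ Sn ↔ IsBoxSolution M n x) →
      ∀ Sbar : Finset (Fin k → κ → ZMod N), (∀ y, y ∈ Sbar ↔ IsModSolution M N y) →
      ∀ i : ℕ, alphaOf Sn i ≤ alphaOf Sbar i ∧ (alphaOf Sbar i : ℝ) ≤ c * alphaOf Sn i := by
  obtain ⟨c, hc⟩ := exists_alphaOf_modSolutions_le hinv l
  refine ⟨c + 1, by positivity, fun n N hN hnN hNl Sn hSn Sbar hSbar i => ⟨?_, ?_⟩⟩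
  · exact alphaOf_boxSolutions_le_alphaOf_modSolutions hnN (fun x => (hSn x).1)
      (fun y => (hSbar y).2) i
  · calc (alphaOf Sbar i : ℝ) ≤ c * alphaOf Sn i := by
          exact_mod_cast hc n N hN hNl Sn (fun x => (hSn x).2) Sbar (fun y => (hSbar y).1) i
      _ ≤ (c + 1) * alphaOf Sn i :=
          mul_le_mul_of_nonneg_right (lt_add_one _).le (Nat.cast_nonneg _)

/-- comparison of the degrees of freedom of an invariant system on the cube
`[1,n]^m` with those of its reduction modulo `λn`. -/
theorem stmt13 (m k : ℕ) (hm : 1 ≤ m) (hk : 1 ≤ k)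
    (M : (Fin k → Fin m → ℤ) →+ (Fin k → Fin m → ℤ))
    (hinv : ∀ x : Fin m → ℤ, M (fun _ => x) = 0) :
    ∃ (lam : ℕ) (c : ℝ), 0 < lam ∧ 0 < c ∧
      ∀ n : ℕ, 1 ≤ n →
      ∀ Sn : Finset (Fin k → Fin m → ℤ),
        (∀ x, x ∈ Sn ↔ (M x = 0 ∧ ∀ j r, x j r ∈ Finset.Icc (1:ℤ) (n:ℤ))) →
      ∀ Sbar : Finset (Fin k → Fin m → ZMod (lam * n)),
        (∀ y, y ∈ Sbar ↔ ∃ x : Fin k → Fin m → ℤ,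
          (∀ j r, ((x j r : ℤ) : ZMod (lam * n)) = y j r) ∧
          (∀ j r, ((M x j r : ℤ) : ZMod (lam * n)) = 0)) →
      ∀ i : ℕ, 1 ≤ i → i ≤ k →
        alphaOf Sn i ≤ alphaOf Sbar i ∧
        (alphaOf Sbar i : ℝ) ≤ c * (alphaOf Sn i : ℝ) := by
  obtain ⟨c, hc, hcomparison⟩ := stmt13_general M hinv 1
  exact ⟨1, c, one_pos, hc, fun n hn Sn hSn Sbar hSbar i _ _ =>
    hcomparison n (1 * n) (by lia) (by lia) le_rfl Sn hSn Sbar hSbar i⟩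
end
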